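/- Let A be a subhomogeneous C*-algebra. Then for any C*-algebra B, the Banach *-algebra A ⊗̂ B is symmetric. -/

import Mathlib

open scoped TensorProduct
open Pointwise

universe u

noncomputable section

/-- A C⋆-norm on a complex `*`-algebra.  On a matrix algebra over a C⋆-algebra such a
norm is unique, namely the canonical C⋆-norm. -/
structure IsCStarNorm {M : Type*} [NonUnitalRing M] [StarRing M] [Module ℂ M]
    (N : M → ℝ) : Prop where
  add_le : ∀ x y, N (x + y) ≤ N x + N y
  smul_eq : ∀ (c : ℂ) (x : M), N (c • x) = ‖c‖ * N x
  eq_zero_of : ∀ x, N x = 0 → x = 0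
  mul_le : ∀ x y, N (x * y) ≤ N x * N y
  star_mul_self : ∀ x, N (star x * x) = N x * N x

/-- The operator space projective tensor norm `‖·‖_∧` on the algebraic tensor product
`A ⊗ B`, relative to given families of matrix norms on `A` and `B`:
`‖u‖_∧ = inf { ‖α‖ ‖v‖ ‖w‖ ‖β‖ : u = α (v ⊗ w) β }` where `v ∈ M_p(A)`, `w ∈ M_q(B)`,
`α ∈ M_{1,pq}(ℂ)` and `β ∈ M_{pq,1}(ℂ)` (row and column vectors carrying the Euclidean
norm, which is their norm as scalar matrices). -/
noncomputable def osProjNorm {A B : Type u}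
    [AddCommGroup A] [Module ℂ A] [AddCommGroup B] [Module ℂ B]
    (NA : ∀ p : ℕ, Matrix (Fin p) (Fin p) A → ℝ)
    (NB : ∀ q : ℕ, Matrix (Fin q) (Fin q) B → ℝ) (u : A ⊗[ℂ] B) : ℝ :=
  sInf { r : ℝ | ∃ (p q : ℕ) (α : Fin p × Fin q → ℂ) (v : Matrix (Fin p) (Fin p) A)
      (w : Matrix (Fin q) (Fin q) B) (β : Fin p × Fin q → ℂ),
      u = ∑ ik : Fin p × Fin q, ∑ jl : Fin p × Fin q,
            (α ik * β jl) • (v ik.1 jl.1 ⊗ₜ[ℂ] w ik.2 jl.2) ∧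
      r = Real.sqrt (∑ ik, ‖α ik‖ ^ 2) * NA p v * NB q w *
            Real.sqrt (∑ jl, ‖β jl‖ ^ 2) }

/-- `X` is a completion of the algebraic tensor product `A ⊗ B` with respect to the
norm `ν`, via the (necessarily isometric) dense embedding `ι`, and the multiplication and
involution of `X` are the canonical ones induced from `A` and `B`.  Applied with
`ν = osProjNorm NA NB` (for the canonical matrix C⋆-norms `NA`, `NB`) this characterizes
the Banach `*`-algebra `A ⊗̂ B` (the operator space projective tensor product) up to
isometric `*`-isomorphism; applied with `ν = bsProjNorm` it characterizes the Banach
space projective tensor product `A ⊗_γ B`. -/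
structure IsTensorCompletion {A B : Type u} [NonUnitalRing A] [StarRing A] [Module ℂ A]
    [NonUnitalRing B] [StarRing B] [Module ℂ B] (ν : A ⊗[ℂ] B → ℝ)
    (X : Type u) [NonUnitalNormedRing X] [StarRing X] [NormedSpace ℂ X] [CompleteSpace X]
    (ι : A ⊗[ℂ] B →ₗ[ℂ] X) : Prop where
  norm_eq : ∀ u, ‖ι u‖ = ν u
  dense : DenseRange ι
  mul_tmul : ∀ (a c : A) (b d : B),
    ι (a ⊗ₜ[ℂ] b) * ι (c ⊗ₜ[ℂ] d) = ι ((a * c) ⊗ₜ[ℂ] (b * d))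
  star_tmul : ∀ (a : A) (b : B), star (ι (a ⊗ₜ[ℂ] b)) = ι (star a ⊗ₜ[ℂ] star b)

/-- The product ideal `S ⊗̂ T`: the closure in `X` (a completion of `A ⊗ B`) of the span of
elementary tensors `a ⊗ b` with `a ∈ S`, `b ∈ T`. -/
def tensorIdeal {A B : Type u} [NonUnitalRing A] [StarRing A] [Module ℂ A]
    [NonUnitalRing B] [StarRing B] [Module ℂ B]
    {X : Type u} [NonUnitalNormedRing X] [StarRing X] [NormedSpace ℂ X] [CompleteSpace X]
    (ι : A ⊗[ℂ] B →ₗ[ℂ] X) (S : Set A) (T : Set B) : Set X :=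
  closure (ι '' (Submodule.span ℂ (Set.image2 (fun a b => a ⊗ₜ[ℂ] b) S T)))

/-- A closed prime (two-sided) ideal of a Banach algebra: a proper closed two-sided ideal `K`
such that whenever the product of two closed two-sided ideals is contained in `K`, one of them
is contained in `K`. -/
def IsClosedPrimeIdeal {Y : Type u} [NonUnitalNormedRing Y] (K : TwoSidedIdeal Y) : Prop :=
  IsClosed (K : Set Y) ∧ (K : Set Y) ≠ Set.univ ∧
    ∀ I J : TwoSidedIdeal Y, IsClosed (I : Set Y) → IsClosed (J : Set Y) →
      (∀ x ∈ I, ∀ y ∈ J, x * y ∈ K) → (I : Set Y) ⊆ (K : Set Y) ∨ (J : Set Y) ⊆ (K : Set Y)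

/-- An irreducible continuous `*`-representation of a Banach `*`-algebra `Y` on a complex
Hilbert space. -/
structure IrreducibleRepOn (Y : Type u)
    [NonUnitalNormedRing Y] [StarRing Y] [NormedSpace ℂ Y] where
  H : Type u
  [normH : NormedAddCommGroup H]
  [ipsH : InnerProductSpace ℂ H]
  [csH : CompleteSpace H]
  π : Y →⋆ₙₐ[ℂ] (H →L[ℂ] H)
  continuous : Continuous π
  nonzero : ∃ y, π y ≠ 0
  irreducible : ∀ S : Submodule ℂ H, IsClosed (S : Set H) →
    (∀ y : Y, ∀ v ∈ S, π y v ∈ S) → S = ⊥ ∨ S = ⊤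

/-- A primitive ideal: the kernel of an irreducible `*`-representation. -/
def IsPrimitiveIdeal {Y : Type u} [NonUnitalNormedRing Y] [StarRing Y] [NormedSpace ℂ Y]
    (K : TwoSidedIdeal Y) : Prop :=
  ∃ ρ : IrreducibleRepOn Y, ∀ y, y ∈ K ↔ ρ.π y = 0

/-- A subset `K` of a ring is modular (as an ideal) if there is a relative unit `e`
with `x * e - x ∈ K` and `e * x - x ∈ K` for every `x`. -/
def IsModularIdealSet {Y : Type u} [NonUnitalRing Y] (K : Set Y) : Prop :=
  ∃ e : Y, ∀ x : Y, x * e - x ∈ K ∧ e * x - x ∈ K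

/-- A maximal modular (two-sided) ideal: a modular ideal which is proper and maximal among
proper two-sided ideals. -/
def IsMaximalModularIdeal {Y : Type u} [NonUnitalRing Y] (K : TwoSidedIdeal Y) : Prop :=
  IsModularIdealSet (K : Set Y) ∧ (K : Set Y) ≠ Set.univ ∧
    ∀ L : TwoSidedIdeal Y, (K : Set Y) ⊆ (L : Set Y) →
      (L : Set Y) = (K : Set Y) ∨ (L : Set Y) = Set.univ

/-- The operator norm of a `p × p` matrix of bounded operators on a Hilbert space `H`,
viewed as an operator on the `ℓ²`-direct sum `H ⊕ ⋯ ⊕ H`. -/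
noncomputable def opMatrixNorm {H : Type u} [NormedAddCommGroup H] [InnerProductSpace ℂ H]
    {p : ℕ} (T : Matrix (Fin p) (Fin p) (H →L[ℂ] H)) : ℝ :=
  sSup { r : ℝ | ∃ x : Fin p → H, (∑ i, ‖x i‖ ^ 2) ≤ 1 ∧
      r = Real.sqrt (∑ i, ‖∑ j, (T i j) (x j)‖ ^ 2) }

/-- An operator algebra structure on a Banach algebra `Y`: a bicontinuous algebra
homomorphism of `Y` into the bounded operators on some Hilbert space. -/
structure OperatorAlgebraEmbedding (Y : Type u) [NonUnitalNormedRing Y] [NormedSpace ℂ Y] where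
  H : Type u
  [normH : NormedAddCommGroup H]
  [ipsH : InnerProductSpace ℂ H]
  [csH : CompleteSpace H]
  ρ : Y →ₙₐ[ℂ] (H →L[ℂ] H)
  c : ℝ
  C : ℝ
  c_pos : 0 < c
  lower : ∀ y, c * ‖y‖ ≤ ‖ρ y‖
  upper : ∀ y, ‖ρ y‖ ≤ C * ‖y‖

/-- The matrix norms on `Y` induced by an operator algebra embedding, giving `Y` its
operator space structure: the norm of `v ∈ M_p(Y)` is the operator norm of the matrix
of operators obtained by applying the embedding entrywise. -/
noncomputable def OperatorAlgebraEmbedding.matrixNorm {Y : Type u}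
    [NonUnitalNormedRing Y] [NormedSpace ℂ Y] (e : OperatorAlgebraEmbedding Y)
    (p : ℕ) (v : Matrix (Fin p) (Fin p) Y) : ℝ :=
  letI := e.normH; letI := e.ipsH
  opMatrixNorm (v.map e.ρ)

/-- The Banach space projective tensor norm `‖·‖_γ` on the algebraic tensor product. -/
noncomputable def bsProjNorm {A B : Type u} [NonUnitalNormedRing A] [NormedSpace ℂ A]
    [NonUnitalNormedRing B] [NormedSpace ℂ B] (u : A ⊗[ℂ] B) : ℝ :=
  sInf { r : ℝ | ∃ (n : ℕ) (a : Fin n → A) (b : Fin n → B),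
      u = ∑ i, a i ⊗ₜ[ℂ] b i ∧ r = ∑ i, ‖a i‖ * ‖b i‖ }

/-- A C⋆-algebra `A` is subhomogeneous if there is `n : ℕ` bounding the (finite)
dimensions of all its irreducible `*`-representations. -/
def IsSubhomogeneous (A : Type u) [NonUnitalCStarAlgebra A] : Prop :=
  ∃ n : ℕ, ∀ ρ : IrreducibleRepOn A,
    letI := ρ.normH
    letI := ρ.ipsH
    FiniteDimensional ℂ ρ.H ∧ Module.finrank ℂ ρ.H ≤ n



section PartOne
open Complex
open scoped ComplexOrder

variable {C : Type u} [CStarAlgebra C] [PartialOrder C] [StarOrderedRing C]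

lemma exists_pos_functional (h : C) (hh : 0 ≤ h) (h0 : h ≠ 0) :
    ∃ f : C →ₚ[ℂ] ℂ, f h ≠ 0 := by
  let K : ProperCone ℝ C :=
    { carrier := {a | 0 ≤ a}
      add_mem' := fun ha hb => add_nonneg ha hb
      zero_mem' := le_refl _
      smul_mem' := fun c x hx => smul_nonneg c.2 hx
      isClosed' := CStarAlgebra.isClosed_nonneg }
  have hn : -h ∉ K := by
    intro hK
    have : 0 ≤ -h := hK
    exact h0 (le_antisymm (by simpa using this) hh)
  obtain ⟨f, hf1, hf2⟩ := ProperCone.hyperplane_separation_point K hn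
  let F : C →ₗ[ℂ] ℂ :=
    { toFun := fun a => (f (realPart a : C) : ℂ) + I * (f (imaginaryPart a : C) : ℂ)
      map_add' := fun a b => by simp; ring
      map_smul' := fun c a => by
        have e1 : ((realPart (c • a) : selfAdjoint C) : C) =
          c.re • (realPart a : C) - c.im • (imaginaryPart a : C) := by
          rw [realPart_smul]; rfl
        have e2 : ((imaginaryPart (c • a) : selfAdjoint C) : C) =
          c.re • (imaginaryPart a : C) + c.im • (realPart a : C) := by
          rw [imaginaryPart_smul]; rfl
        rw [e1, e2]
        simp only [map_sub, map_add, map_smul, smul_eq_mul, RingHom.id_apply]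
        apply Complex.ext <;> simp }
  have hF : ∀ x : C, 0 ≤ x → F x = (f x : ℂ) := by
    intro x hx
    have hs : IsSelfAdjoint x := .of_nonneg hx
    simp [F, hs.coe_realPart, hs.imaginaryPart]
  refine ⟨PositiveLinearMap.mk₀ F fun x hx => ?_, ?_⟩
  · rw [hF x hx]; exact_mod_cast hf1 x hx
  · change F h ≠ 0
    rw [hF h hh]
    have : f (-h) < 0 := hf2
    rw [map_neg] at this
    norm_cast
    linarith

/-- states as functions -/
def stateSet (C : Type u) [CStarAlgebra C] [PartialOrder C] [StarOrderedRing C] : Set (C → ℂ) :=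
  {g | (∀ a b, g (a + b) = g a + g b) ∧ (∀ (c : ℂ) a, g (c • a) = c * g a) ∧
    (∀ a, 0 ≤ a → 0 ≤ g a) ∧ g 1 = 1}

def stateSet.toPos {g : C → ℂ} (hg : g ∈ stateSet C) : C →ₚ[ℂ] ℂ :=
  PositiveLinearMap.mk₀
    { toFun := g, map_add' := hg.1, map_smul' := hg.2.1 } hg.2.2.1

lemma mem_stateSet (f : C →ₚ[ℂ] ℂ) (h1 : f 1 = 1) : (f : C → ℂ) ∈ stateSet C :=
  ⟨map_add f, fun c a => by simp, fun a ha => f.map_nonneg ha, h1⟩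

lemma stateSet_bound {g : C → ℂ} (hg : g ∈ stateSet C) (a : C) : ‖g a‖ ≤ 2 * ‖a‖ := by
  have key : ∀ b : C, IsSelfAdjoint b → ‖g b‖ ≤ ‖b‖ := by
    intro b hb
    have := (stateSet.toPos hg).apply_le_of_isSelfAdjoint b hb
    have h2 := (stateSet.toPos hg).apply_le_of_isSelfAdjoint (-b) hb.neg
    have h3 : (stateSet.toPos hg) b = g b := rfl
    have h4 : (stateSet.toPos hg) (algebraMap ℝ C ‖b‖) = (‖b‖ : ℂ) := by
      change g _ = _
      have : algebraMap ℝ C ‖b‖ = (‖b‖ : ℂ) • (1 : C) := by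
        rw [Algebra.algebraMap_eq_smul_one]; simp
      rw [this, hg.2.1, hg.2.2.2, mul_one]
    rw [norm_neg, map_neg, h4, h3] at h2
    rw [h4, h3] at this
    have i1 := (Complex.le_def.1 this)
    have i2 := (Complex.le_def.1 h2)
    have him : (g b).im = 0 := by simpa using i1.2
    have : g b = ((g b).re : ℂ) := by apply Complex.ext <;> simp [him]
    rw [this, Complex.norm_real, Real.norm_eq_abs, abs_le]
    simp at i1 i2
    constructor <;> linarith [i1.1, i2.1]
  have hd := realPart_add_I_smul_imaginaryPart a
  calc ‖g a‖ = ‖g ((realPart a : C) + I • (imaginaryPart a : C))‖ := by rw [hd]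
    _ = ‖g (realPart a : C) + I * g (imaginaryPart a : C)‖ := by rw [hg.1, hg.2.1]
    _ ≤ ‖g (realPart a : C)‖ + ‖I * g (imaginaryPart a : C)‖ := norm_add_le _ _
    _ ≤ ‖a‖ + ‖a‖ := by
      gcongr
      · exact (key _ (realPart a).2).trans (realPart.norm_le a)
      · rw [norm_mul, Complex.norm_I, one_mul]
        exact (key _ (imaginaryPart a).2).trans (imaginaryPart.norm_le a)
    _ = _ := by ring

lemma stateSet_compact : IsCompact (stateSet C) := by
  have h1 : IsCompact (Set.univ.pi fun a : C => Metric.closedBall (0 : ℂ) (2 * ‖a‖)) :=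
    isCompact_univ_pi fun a => isCompact_closedBall _ _
  refine h1.of_isClosed_subset ?_ ?_
  · have : stateSet C = (⋂ a, ⋂ b, {g : C → ℂ | g (a + b) = g a + g b}) ∩
      ((⋂ c : ℂ, ⋂ a, {g : C → ℂ | g (c • a) = c * g a}) ∩
      ((⋂ a : C, ⋂ _ : 0 ≤ a, {g : C → ℂ | 0 ≤ g a}) ∩ {g : C → ℂ | g 1 = 1})) := by
      ext g; simp [stateSet]
    rw [this]
    refine IsClosed.inter ?_ (IsClosed.inter ?_ (IsClosed.inter ?_ ?_))
    · exact isClosed_iInter fun a => isClosed_iInter fun b =>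
        isClosed_eq (by fun_prop) (by fun_prop)
    · exact isClosed_iInter fun a => isClosed_iInter fun b =>
        isClosed_eq (by fun_prop) (by fun_prop)
    · exact isClosed_iInter fun a => isClosed_iInter fun b =>
        isClosed_le (by fun_prop) (by fun_prop)
    · exact isClosed_eq (by fun_prop) (by fun_prop)
  · intro g hg
    simp only [Set.mem_pi, Set.mem_univ, forall_const, mem_closedBall_zero_iff]
    exact fun a => stateSet_bound hg a

lemma stateSet_convex : Convex ℝ (stateSet C) := by
  intro f hf g hg s t hs ht hst
  refine ⟨fun a b => ?_, fun c a => ?_, fun a ha => ?_, ?_⟩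
  · simp [hf.1, hg.1]; ring
  · simp [hf.2.1, hg.2.1]; ring
  · exact add_nonneg (smul_nonneg hs (hf.2.2.1 a ha)) (smul_nonneg ht (hg.2.2.1 a ha))
  · simp [hf.2.2.2, hg.2.2.2]; exact_mod_cast hst

lemma exists_pure_state (h : C) (hh : 0 ≤ h) (h0 : h ≠ 0) :
    ∃ f ∈ Set.extremePoints ℝ (stateSet C), f h ≠ 0 := by
  by_contra! hcon
  obtain ⟨F, hF⟩ := exists_pos_functional h hh h0
  have hF1 : 0 ≤ F 1 := F.map_nonneg zero_le_one
  have hle : F h ≤ F (algebraMap ℝ C ‖h‖) := F.apply_le_of_isSelfAdjoint h (.of_nonneg hh)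
  have hF1' : F (algebraMap ℝ C ‖h‖) = ‖h‖ * F 1 := by
    have : algebraMap ℝ C ‖h‖ = (‖h‖ : ℂ) • (1 : C) := by
      rw [Algebra.algebraMap_eq_smul_one]; simp
    rw [this, map_smul, smul_eq_mul]
  have hne : F 1 ≠ 0 := by
    intro h1
    rw [hF1', h1, mul_zero] at hle
    exact hF (le_antisymm hle (F.map_nonneg hh))
  have hinv : 0 ≤ (F 1)⁻¹ := by
    have := Complex.nonneg_iff.1 hF1
    have e : F 1 = ((F 1).re : ℂ) := by apply Complex.ext <;> simp [← this.2]
    rw [e, ← Complex.ofReal_inv]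
    exact_mod_cast inv_nonneg.2 this.1
  let g : C → ℂ := fun a => (F 1)⁻¹ * F a
  have hg : g ∈ stateSet C := by
    refine ⟨fun a b => by simp [g, mul_add], fun c a => by simp [g]; ring,
      fun a ha => mul_nonneg hinv (F.map_nonneg ha), by simp [g, hne]⟩
  have hcl : IsClosed {f : C → ℂ | f h = 0} := isClosed_eq (by fun_prop) (by fun_prop)
  have hcv : Convex ℝ {f : C → ℂ | f h = 0} := by
    intro f hf g hg s t hs ht hst
    simp only [Set.mem_ofPred_eq] at hf hg ⊢
    simp [hf, hg]
  have hsub : closure (convexHull ℝ (Set.extremePoints ℝ (stateSet C))) ⊆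
      {f : C → ℂ | f h = 0} :=
    closure_minimal (convexHull_min (fun f hf => hcon f hf) hcv) hcl
  rw [closure_convexHull_extremePoints stateSet_compact stateSet_convex] at hsub
  have := hsub hg
  simp [g, hne, hF] at this

end PartOne

section PartTwo
open Complex
open scoped ComplexOrder InnerProductSpace

lemma gns_irreducible {C : Type u} [CStarAlgebra C] [PartialOrder C] [StarOrderedRing C]
    {g : C → ℂ} (hg : g ∈ Set.extremePoints ℝ (stateSet C)) (F : C →ₚ[ℂ] ℂ)
    (hF : ∀ a, F a = g a)
    (S : Submodule ℂ F.GNS) (hS : IsClosed (S : Set F.GNS))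
    (hinv : ∀ a : C, ∀ v ∈ S, F.gnsNonUnitalStarAlgHom a v ∈ S) : S = ⊥ ∨ S = ⊤ := by
  have hgS : g ∈ stateSet C := hg.1
  haveI : CompleteSpace S := hS.completeSpace_coe
  set π := F.gnsNonUnitalStarAlgHom with hπ
  let ξ : F.GNS := ((F.toPreGNS 1 : F.PreGNS) : F.GNS)
  have hπξ : ∀ a, π a ξ = ((F.toPreGNS a : F.PreGNS) : F.GNS) := by
    intro a
    simp [π, ξ]
  have hdense : ∀ v : F.GNS, (∀ a, ⟪π a ξ, v⟫_ℂ = 0) → v = 0 := by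
    intro v hv
    have hd : DenseRange (fun a : C => π a ξ) := by
      have : (fun a : C => π a ξ) = (fun x : F.PreGNS => (x : F.GNS)) ∘ F.toPreGNS := by
        ext a; exact hπξ a
      rw [this]
      exact UniformSpace.Completion.denseRange_coe.comp F.toPreGNS.surjective.denseRange
        (UniformSpace.Completion.continuous_coe _)
    have : ∀ w, ⟪w, v⟫_ℂ = 0 := by
      intro w
      refine hd.induction_on (p := fun w => ⟪w, v⟫_ℂ = 0) w ?_ hv
      exact isClosed_eq (by fun_prop) (by fun_prop)
    exact inner_self_eq_zero.1 (this v)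
  have hgi : ∀ a, g a = ⟪ξ, π a ξ⟫_ℂ := by
    intro a
    rw [hπξ]
    simp only [ξ]
    rw [UniformSpace.Completion.inner_coe, PositiveLinearMap.preGNS_inner_def]
    simp [hF]
  have hstar : ∀ a (v w : F.GNS), ⟪π a v, w⟫_ℂ = ⟪v, π (star a) w⟫_ℂ := by
    intro a v w
    rw [map_star, ContinuousLinearMap.star_eq_adjoint, ContinuousLinearMap.adjoint_inner_right]
  have hπ1 : ∀ v, π 1 v = v := by
    intro v
    have h1 := (F.gnsStarAlgHom).map_one
    have : π 1 = 1 := h1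
    rw [this]; rfl
  have hinv' : ∀ a : C, ∀ v ∈ Sᗮ, π a v ∈ Sᗮ := by
    intro a v hv w hw
    have := hstar (star a) w v
    rw [star_star] at this
    rw [← this]
    exact hv _ (hinv _ _ hw)
  let P := S.starProjection
  let η := P ξ
  let ζ := ξ - η
  have hη : η ∈ S := Submodule.starProjection_apply_mem _ _
  have hζ : ζ ∈ Sᗮ := Submodule.sub_starProjection_mem_orthogonal _
  have hsum : ξ = η + ζ := by simp [ζ]
  have horth1 : ∀ a, ⟪ζ, π a η⟫_ℂ = 0 := fun a =>
    (Submodule.mem_orthogonal' _ _).1 hζ _ (hinv a _ hη)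
  have horth2 : ∀ a, ⟪η, π a ζ⟫_ℂ = 0 := fun a =>
    (Submodule.mem_orthogonal _ _).1 (hinv' a _ hζ) _ hη
  have hdec : ∀ a, g a = ⟪η, π a η⟫_ℂ + ⟪ζ, π a ζ⟫_ℂ := by
    intro a
    rw [hgi, hsum, map_add, inner_add_left, inner_add_right, inner_add_right, horth1, horth2]
    ring
  have hpos : ∀ v : F.GNS, ∀ a : C, 0 ≤ a → 0 ≤ ⟪v, π a v⟫_ℂ := by
    intro v a ha
    obtain ⟨b, rfl⟩ := CStarAlgebra.nonneg_iff_eq_star_mul_self.1 ha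
    have : π (star b * b) v = π (star b) (π b v) := by rw [map_mul]; rfl
    rw [this, ← hstar, inner_self_eq_norm_sq_to_K]
    norm_cast
    positivity
  have hst : ∀ v : F.GNS, v ≠ 0 → (fun a => ((‖v‖ ^ 2)⁻¹ : ℝ) * ⟪v, π a v⟫_ℂ) ∈ stateSet C := by
    intro v hv
    refine ⟨fun a b => ?_, fun c a => ?_, fun a ha => ?_, ?_⟩
    · simp [map_add, inner_add_right, mul_add]
    · simp [map_smul, inner_smul_right]; ring
    · refine mul_nonneg ?_ (hpos v a ha)
      exact_mod_cast (by positivity : (0 : ℝ) ≤ (‖v‖ ^ 2)⁻¹)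
    · simp only [hπ1, inner_self_eq_norm_sq_to_K]
      have : (‖v‖ : ℂ) ≠ 0 := by simpa using hv
      simp
      field_simp
  by_cases hη0 : η = 0
  · left
    have hξ : ξ ∈ Sᗮ := by rw [hsum, hη0, zero_add]; exact hζ
    rw [Submodule.eq_bot_iff]
    intro v hv
    refine hdense v fun a => ?_
    exact (Submodule.mem_orthogonal' _ _).1 (hinv' a _ hξ) _ hv
  by_cases hζ0 : ζ = 0
  · right
    have hξ : ξ ∈ S := by rw [hsum, hζ0, add_zero]; exact hη
    rw [← Submodule.orthogonal_eq_bot_iff, Submodule.eq_bot_iff]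
    intro v hv
    refine hdense v fun a => ?_
    exact (Submodule.mem_orthogonal _ _).1 hv _ (hinv a _ hξ)
  exfalso
  have hnorm : ‖η‖ ^ 2 + ‖ζ‖ ^ 2 = 1 := by
    have h1 := hdec 1
    rw [hgS.2.2.2, hπ1, hπ1, inner_self_eq_norm_sq_to_K, inner_self_eq_norm_sq_to_K] at h1
    have h2 := congrArg Complex.re h1
    simp [← Complex.ofReal_pow] at h2
    exact h2.symm
  have hη' : 0 < ‖η‖ ^ 2 := by positivity
  have hζ' : 0 < ‖ζ‖ ^ 2 := by positivity
  have hex := (mem_extremePoints.1 hg).2 _ (hst η hη0) _ (hst ζ hζ0)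
    ⟨‖η‖ ^ 2, ‖ζ‖ ^ 2, hη', hζ', hnorm, by
      ext a
      have h1 : (‖η‖ : ℂ) ≠ 0 := by simpa using hη0
      have h2 : (‖ζ‖ : ℂ) ≠ 0 := by simpa using hζ0
      rw [hdec a]
      simp
      field_simp⟩
  have h3 : ∀ a, ⟪η, π a η⟫_ℂ = (‖η‖ ^ 2 : ℝ) * g a := by
    intro a
    have := congrFun hex.1 a
    have h1 : (‖η‖ : ℂ) ≠ 0 := by simpa using hη0
    rw [← this]
    simp
    field_simp
  have h4 : η - ((‖η‖ ^ 2 : ℝ) : ℂ) • ξ = 0 := by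
    refine hdense _ fun a => ?_
    have e1 : ⟪π a ξ, η⟫_ℂ = ⟪η, π (star a) η⟫_ℂ := by
      rw [hstar, hsum, inner_add_left, horth1, add_zero]
    have e2 : ⟪π a ξ, ξ⟫_ℂ = g (star a) := by rw [hstar, hgi]
    rw [inner_sub_right, inner_smul_right, e1, e2, h3, sub_self]
  have h5 : ζ = 0 := by
    have hξS : ξ ∈ S := by
      have hne : ((‖η‖ ^ 2 : ℝ) : ℂ) ≠ 0 := by exact_mod_cast hη'.ne'
      have : ξ = (((‖η‖ ^ 2 : ℝ) : ℂ))⁻¹ • η := by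
        rw [sub_eq_zero.1 h4, smul_smul, ← sub_eq_zero.1 h4, inv_mul_cancel₀ hne, one_smul]
      rw [this]
      exact S.smul_mem _ hη
    have : ζ ∈ S := S.sub_mem hξS hη
    exact inner_self_eq_zero.1 ((Submodule.mem_orthogonal _ _).1 hζ _ this)
  exact hζ0 h5

lemma exists_irreducible {A : Type u} [NonUnitalCStarAlgebra A] (c : A) (hc : c ≠ 0) :
    ∃ ρ : IrreducibleRepOn A, ρ.π c ≠ 0 := by
  letI : PartialOrder (Unitization ℂ A) := CStarAlgebra.spectralOrder _
  haveI : StarOrderedRing (Unitization ℂ A) := CStarAlgebra.spectralOrderedRing _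
  let c' : Unitization ℂ A := (c : Unitization ℂ A)
  have hc' : star c' * c' ≠ 0 := by
    intro h
    rw [CStarRing.star_mul_self_eq_zero_iff] at h
    exact hc (Unitization.inr_injective (R := ℂ) (by simpa [c'] using h))
  obtain ⟨g, hg, hgc⟩ := exists_pure_state (star c' * c') (star_mul_self_nonneg _) hc'
  let F := stateSet.toPos hg.1
  have hF : ∀ a, F a = g a := fun a => rfl
  let π : A →⋆ₙₐ[ℂ] (F.GNS →L[ℂ] F.GNS) :=
    F.gnsNonUnitalStarAlgHom.comp (Unitization.inrNonUnitalStarAlgHom ℂ A)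
  have hne : π c ≠ 0 := by
    intro h0
    have h1 : π c ((F.toPreGNS 1 : F.PreGNS) : F.GNS) = 0 := by rw [h0]; rfl
    have h2 : π c ((F.toPreGNS 1 : F.PreGNS) : F.GNS) = ((F.toPreGNS c' : F.PreGNS) : F.GNS) := by
      simp [π, c']
    rw [h2] at h1
    have h3 : ‖F.toPreGNS c'‖ = 0 := by
      rw [← UniformSpace.Completion.norm_coe, h1, norm_zero]
    have h4 := F.preGNS_norm_sq (F.toPreGNS c')
    rw [h3] at h4
    simp [hF] at h4
    exact hgc h4.symm
  refine ⟨{ H := F.GNS, π := π, continuous := ?_, nonzero := ⟨c, hne⟩, irreducible := ?_ }, hne⟩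
  · letI : CStarAlgebra (F.GNS →L[ℂ] F.GNS) := {}
    exact AddMonoidHomClass.continuous_of_bound π 1 fun a => by
      rw [one_mul]; exact NonUnitalStarAlgHom.norm_apply_le π a
  · intro S hS hinv
    refine gns_irreducible hg F hF S hS fun a v hv => ?_
    have e : a = algebraMap ℂ _ a.fst + (a.snd : Unitization ℂ A) := by
      rw [Unitization.algebraMap_eq_inl]
      exact (Unitization.inl_fst_add_inr_snd_eq a).symm
    rw [e, map_add, Algebra.algebraMap_eq_smul_one, map_smul]
    have h1 : F.gnsNonUnitalStarAlgHom 1 = 1 := (F.gnsStarAlgHom).map_one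
    rw [h1]
    exact S.add_mem (S.smul_mem _ hv) (hinv a.snd v hv)

end PartTwo

section PartThree

lemma IsCStarNorm.zero' {M : Type*} [NonUnitalRing M] [StarRing M] [Module ℂ M]
    {N : M → ℝ} (hN : IsCStarNorm N) : N 0 = 0 := by
  have := hN.smul_eq 0 0
  simpa using this

lemma IsCStarNorm.nonneg' {M : Type*} [NonUnitalRing M] [StarRing M] [Module ℂ M]
    {N : M → ℝ} (hN : IsCStarNorm N) (x : M) : 0 ≤ N x := by
  have h1 := hN.smul_eq (-1) x
  have h2 := hN.add_le x ((-1 : ℂ) • x)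
  rw [h1] at h2
  simp [hN.zero'] at h2
  exact h2

lemma IsCStarNorm.le_one_of_sa {M : Type*} [NonUnitalCStarAlgebra M]
    {N : M → ℝ} (hN : IsCStarNorm N) (k : M) (hk : IsSelfAdjoint k) (h1 : ‖k‖ ≤ 1) :
    N k ≤ 1 := by
  have hq : ∀ x ∈ quasispectrum ℝ k, x ^ 2 ≤ 1 := by
    intro x hx
    have h0 : ‖x‖ ≤ ‖k‖ := by
      have := NonUnitalIsometricContinuousFunctionalCalculus.norm_quasispectrum_le (𝕜 := ℝ) k hx hk
      simpa using this
    rw [Real.norm_eq_abs] at h0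
    nlinarith [abs_nonneg x, sq_abs x]
  set z : M := cfcₙ (fun x : ℝ => x * Real.sqrt (1 - x ^ 2)) k with hz
  have hzs : IsSelfAdjoint z := cfcₙ_predicate _ _
  have hkk : k * k = cfcₙ (fun x : ℝ => x * x) k := by
    rw [cfcₙ_mul (fun x : ℝ => x) (fun x : ℝ => x) k, cfcₙ_id' ℝ k]
  have hcomm : (k * k) * z = z * (k * k) := by
    rw [hkk]; exact cfcₙ_commute_cfcₙ _ _ k
  have hsum : (k * k) * (k * k) + z * z = k * k := by
    rw [hkk, hz, ← cfcₙ_mul (fun x : ℝ => x * x) (fun x : ℝ => x * x) k,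
      ← cfcₙ_mul _ _ k (by fun_prop) (by simp) (by fun_prop) (by simp), ← cfcₙ_add _ _ k (by fun_prop) (by simp) (by fun_prop) (by simp)]
    refine cfcₙ_congr fun x hx => ?_
    have := hq x hx
    have h3 := Real.mul_self_sqrt (by linarith : 0 ≤ 1 - x ^ 2)
    linear_combination x^2 * h3
  have hsk : star (k * k) = k * k := by simp [hk.star_eq]
  have hw : ∀ c : ℂ, c * c = -1 → star c = -c → N (k * k + c • z) = N k := by
    intro c hc hc'
    have e : star (k * k + c • z) * (k * k + c • z) = star k * k := by
      rw [star_add, star_smul, hzs.star_eq, hsk, hc', hk.star_eq]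
      rw [add_mul, mul_add, mul_add]
      simp only [smul_mul_assoc, mul_smul_comm, smul_smul, neg_mul, hc, neg_smul, hcomm]
      rw [smul_neg, smul_smul, hc, neg_smul, one_smul, neg_neg]
      nth_rewrite 5 [← hsum]
      abel
    have h3 := hN.star_mul_self (k * k + c • z)
    rw [e, hN.star_mul_self] at h3
    have h4 := hN.nonneg' k
    have h5 := hN.nonneg' (k * k + c • z)
    nlinarith
  have e1 := hw Complex.I (by simp) (by simp)
  have e2 := hw (-Complex.I) (by simp) (by simp)
  have e3 := hN.add_le (k * k + Complex.I • z) (k * k + (-Complex.I) • z)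
  rw [e1, e2] at e3
  have e4 : (k * k + Complex.I • z) + (k * k + (-Complex.I) • z) = (2 : ℂ) • (star k * k) := by
    rw [hk.star_eq, neg_smul, two_smul]; abel
  rw [e4, hN.smul_eq, hN.star_mul_self] at e3
  simp at e3
  have h4 := hN.nonneg' k
  by_contra h
  push Not at h
  nlinarith

lemma IsCStarNorm.le_norm {M : Type*} [NonUnitalCStarAlgebra M]
    {N : M → ℝ} (hN : IsCStarNorm N) (x : M) : N x ≤ ‖x‖ := by
  have hsa : ∀ k : M, IsSelfAdjoint k → N k ≤ ‖k‖ := by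
    intro k hk
    by_cases h0 : k = 0
    · subst h0; simp [hN.zero']
    have hn : 0 < ‖k‖ := norm_pos_iff.2 h0
    have h1 := hN.le_one_of_sa ((‖k‖⁻¹ : ℝ) • k) (IsSelfAdjoint.smul (IsSelfAdjoint.all _) hk) (by
      rw [norm_smul]; simp [hn.ne'])
    have h2 : ((‖k‖⁻¹ : ℝ) • k) = ((‖k‖⁻¹ : ℝ) : ℂ) • k := (Complex.coe_smul _ _).symm
    rw [h2, hN.smul_eq] at h1
    simp at h1
    rw [inv_mul_le_iff₀ hn, mul_one] at h1
    exact h1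
  have h1 := hsa (star x * x) (.star_mul_self x)
  rw [hN.star_mul_self, CStarRing.norm_star_mul_self] at h1
  have := hN.nonneg' x
  nlinarith [norm_nonneg x]

lemma IsCStarNorm.norm_le_sa {M : Type*} [NonUnitalCStarAlgebra M]
    {N : M → ℝ} (hN : IsCStarNorm N) (h : M) (hs : IsSelfAdjoint h)
    (hpos : ∀ s ∈ quasispectrum ℝ h, 0 ≤ s) : ‖h‖ ≤ N h := by
  by_contra hlt
  push Not at hlt
  obtain ⟨t, ht1, ht2⟩ := exists_between hlt
  have hN0 := hN.nonneg' h
  have ht0 : 0 < t := lt_of_le_of_lt hN0 ht1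
  have hmx : ∀ s : ℝ, max s t ≠ 0 := fun s => (lt_of_lt_of_le ht0 (le_max_right _ _)).ne'
  let f : ℕ → ℝ → ℝ := fun m s => (t / max s t) ^ m * max (s - t) 0
  have hfc : ∀ m, Continuous (f m) := by
    intro m
    have : Continuous fun s : ℝ => t / max s t :=
      continuous_const.div (by fun_prop) hmx
    exact (this.pow m).mul (by fun_prop)
  have hf0 : ∀ m, f m 0 = 0 := by
    intro m; simp [f, ht0.le]
  let g : ℕ → M := fun m => cfcₙ (f m) h
  have hq : ∀ x ∈ quasispectrum ℝ h, x ≤ ‖h‖ := by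
    intro x hx
    have := NonUnitalIsometricContinuousFunctionalCalculus.norm_quasispectrum_le (𝕜 := ℝ) h hx hs
    exact (le_abs_self x).trans this
  have hgn : ∀ m, ‖g m‖ ≤ ‖h‖ := by
    intro m
    refine norm_cfcₙ_le fun s hsq => ?_
    have h1 : 0 ≤ t / max s t := by positivity
    have h2 : t / max s t ≤ 1 := by
      rw [div_le_one (lt_of_lt_of_le ht0 (le_max_right _ _))]; exact le_max_right _ _
    have h3 : 0 ≤ max (s - t) 0 := le_max_right _ _
    have h4 : max (s - t) 0 ≤ ‖h‖ := max_le (by linarith [hq s hsq]) (norm_nonneg _)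
    have h5 : (t / max s t) ^ m ≤ 1 := pow_le_one₀ h1 h2
    simp only [f]
    rw [Real.norm_eq_abs, abs_of_nonneg (by positivity)]
    calc _ ≤ 1 * max (s - t) 0 := by gcongr
      _ ≤ _ := by rw [one_mul]; exact h4
  have hrec : ∀ m, g (m + 1) * h = (t : ℂ) • g m := by
    intro m
    have e0 : (t : ℂ) • g m = t • g m := by simp
    rw [e0]
    simp only [g]
    conv_lhs => rw [← cfcₙ_id' ℝ h, cfcₙ_id' ℝ h]
    nth_rewrite 2 [← cfcₙ_id' ℝ h]
    rw [← cfcₙ_mul _ _ h (hfc _).continuousOn (hf0 _), ← cfcₙ_smul t _ h (hfc _).continuousOn (hf0 _)]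
    refine cfcₙ_congr fun s hsq => ?_
    simp only [f, smul_eq_mul]
    rcases le_total s t with hst | hst
    · rw [max_eq_right (a := s - t) (b := 0) (by linarith)]; ring
    · rw [max_eq_left hst]
      have : s ≠ 0 := (lt_of_lt_of_le ht0 hst).ne'
      have e : (t / s) ^ (m + 1) * s = t * (t / s) ^ m := by
        rw [pow_succ]; field_simp
      linear_combination (max (s - t) 0) * e
  have hNg : ∀ m, N (g 0) ≤ (N h / t) ^ m * ‖h‖ := by
    intro m
    have : ∀ m, N (g 0) ≤ (N h / t) ^ m * N (g m) := by
      intro m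
      induction m with
      | zero => simp
      | succ m ih =>
        refine ih.trans ?_
        have h1 := hN.mul_le (g (m + 1)) h
        rw [hrec, hN.smul_eq] at h1
        simp [abs_of_pos ht0] at h1
        have h2 : N (g m) ≤ N h / t * N (g (m+1)) := by
          rw [div_mul_eq_mul_div, le_div_iff₀ ht0]; linarith
        rw [pow_succ, mul_assoc]
        gcongr
    refine (this m).trans ?_
    have : N (g m) ≤ ‖h‖ := (hN.le_norm _).trans (hgn m)
    gcongr
  have hlim : Filter.Tendsto (fun m : ℕ => (N h / t) ^ m * ‖h‖) Filter.atTop (nhds 0) := by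
    have := (tendsto_pow_atTop_nhds_zero_of_lt_one (r := N h / t) (by positivity)
      (by rw [div_lt_one ht0]; exact ht1)).mul_const ‖h‖
    simpa using this
  have hg0 : g 0 = 0 := by
    refine hN.eq_zero_of _ (le_antisymm (ge_of_tendsto' hlim hNg) (hN.nonneg' _))
  have hsplit : h = cfcₙ (fun s : ℝ => min s t) h + g 0 := by
    simp only [g]
    rw [← cfcₙ_add _ _ h (by fun_prop) (by simp [ht0.le]) (hfc 0).continuousOn (hf0 0)]
    conv_lhs => rw [← cfcₙ_id' ℝ h]
    refine cfcₙ_congr fun s hsq => ?_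
    simp only [f]
    rcases le_total s t with hst | hst
    · rw [max_eq_right (a := s - t) (b := 0) (by linarith), min_eq_left hst]; ring
    · rw [max_eq_left (a := s - t) (b := 0) (by linarith), min_eq_right hst]; ring
  rw [hg0, add_zero] at hsplit
  have : ‖h‖ ≤ t := by
    rw [hsplit]
    refine norm_cfcₙ_le fun s hsq => ?_
    rw [Real.norm_eq_abs, abs_of_nonneg (le_min (hpos s hsq) ht0.le)]
    exact min_le_right _ _
  linarith

theorem IsCStarNorm.eq_norm {M : Type*} [NonUnitalCStarAlgebra M]
    {N : M → ℝ} (hN : IsCStarNorm N) (x : M) : N x = ‖x‖ := by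
  refine le_antisymm (hN.le_norm x) ?_
  letI : PartialOrder M := CStarAlgebra.spectralOrder _
  haveI : StarOrderedRing M := CStarAlgebra.spectralOrderedRing _
  have h1 := hN.norm_le_sa (star x * x) (.star_mul_self x) (fun s hs =>
    quasispectrum_nonneg_of_nonneg _ (star_mul_self_nonneg x) s hs)
  rw [hN.star_mul_self, CStarRing.norm_star_mul_self] at h1
  have := hN.nonneg' x
  nlinarith [norm_nonneg x]

/-- The matrix C⋆-norm is the norm of `CStarMatrix`. -/
theorem matrix_norm_eq {A : Type*} [NonUnitalCStarAlgebra A] [PartialOrder A] [StarOrderedRing A]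
    {p : ℕ} {N : Matrix (Fin p) (Fin p) A → ℝ} (hN : IsCStarNorm N)
    (v : Matrix (Fin p) (Fin p) A) : N v = ‖(CStarMatrix.ofMatrix v : CStarMatrix (Fin p) (Fin p) A)‖ := by
  have hN' : IsCStarNorm (M := CStarMatrix (Fin p) (Fin p) A)
      (fun x => N (CStarMatrix.ofMatrix.symm x)) := by
    refine ⟨fun x y => hN.add_le _ _, fun c x => hN.smul_eq _ _, fun x hx => ?_, fun x y => hN.mul_le _ _, fun x => ?_⟩
    · exact hN.eq_zero_of _ hx
    · exact hN.star_mul_self _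
  exact hN'.eq_norm (CStarMatrix.ofMatrix v)

end PartThree

section PartFour
open scoped ComplexOrder InnerProductSpace

variable {A : Type u} [NonUnitalCStarAlgebra A] [PartialOrder A] [StarOrderedRing A]
  {R : Type*} [NormedRing R] [NormedAlgebra ℂ R]

lemma T_eq_zero_of_sq (T : A →ₙₐ[ℂ] R) (hT : Continuous T) (z : A) (hz : IsSelfAdjoint z)
    (h0 : T (z * z) = 0) : T z = 0 := by
  let f : ℝ → ℝ → ℝ := fun ε x => x / (x ^ 2 + ε ^ 2)
  have key : ∀ ε : ℝ, 0 < ε → ‖z - z * z * cfcₙ (f ε) z‖ ≤ ε := by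
    intro ε hε
    have hden : ∀ x : ℝ, x ^ 2 + ε ^ 2 ≠ 0 := fun x => by positivity
    have hc : Continuous (f ε) := continuous_id.div (by fun_prop) hden
    have hf0 : f ε 0 = 0 := by simp [f]
    have e : z - z * z * cfcₙ (f ε) z = cfcₙ (fun x => x - x * x * f ε x) z := by
      rw [cfcₙ_sub (fun x => x) (fun x => x * x * f ε x) z (by fun_prop) rfl (by fun_prop) (by simp),
        cfcₙ_mul (fun x => x * x) (f ε) z (by fun_prop) (by simp) hc.continuousOn hf0,
        cfcₙ_mul (fun x => x) (fun x => x) z, cfcₙ_id' ℝ z]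
    rw [e]
    refine norm_cfcₙ_le fun x _ => ?_
    have e2 : x - x * x * f ε x = x * ε ^ 2 / (x ^ 2 + ε ^ 2) := by
      have := hden x
      simp only [f]; field_simp; ring
    rw [e2, Real.norm_eq_abs, abs_div, abs_of_pos (by positivity : 0 < x ^ 2 + ε ^ 2),
      div_le_iff₀ (by positivity), abs_mul, abs_of_pos (by positivity : 0 < ε ^ 2), ← sq_abs x]
    nlinarith [sq_nonneg (|x| - ε), abs_nonneg x, mul_nonneg hε.le (sq_nonneg (|x| - ε)),
      mul_nonneg hε.le (mul_nonneg (abs_nonneg x) hε.le)]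
  have hlim : Filter.Tendsto (fun n : ℕ => z - z * z * cfcₙ (f (1 / ((n : ℝ) + 1))) z)
      Filter.atTop (nhds 0) :=
    squeeze_zero_norm (fun n => key _ (by positivity)) tendsto_one_div_add_atTop_nhds_zero_nat
  have h2 := (hT.tendsto 0).comp hlim
  rw [map_zero] at h2
  have h3 : (T ∘ fun n : ℕ => z - z * z * cfcₙ (f (1 / ((n : ℝ) + 1))) z) = fun _ => T z := by
    ext n
    simp [h0]
  rw [h3] at h2
  exact tendsto_nhds_unique tendsto_const_nhds h2

lemma orth_family_card (n : ℕ)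
    (hn : ∀ ρ : IrreducibleRepOn A, letI := ρ.normH; letI := ρ.ipsH
      FiniteDimensional ℂ ρ.H ∧ Module.finrank ℂ ρ.H ≤ n)
    (T : A →ₙₐ[ℂ] R)
    (hprime : ∀ a c, (∀ x, T a * T x * T c = 0) → T a = 0 ∨ T c = 0)
    (S : Finset A) (hS0 : ∀ a ∈ S, 0 ≤ a) (hST : ∀ a ∈ S, T a ≠ 0)
    (hSo : ∀ a ∈ S, ∀ b ∈ S, a ≠ b → a * b = 0) : S.card ≤ n := by
  classical
  by_cases hne : ∃ a, T a ≠ 0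
  swap
  · push Not at hne
    have : S = ∅ := Finset.eq_empty_of_forall_notMem fun a ha => hST a ha (hne a)
    simp [this]
  have h1 : ∀ S' : Finset A, S' ⊆ S → ∃ w : A, T w ≠ 0 ∧
      ∀ ρ : IrreducibleRepOn A, ρ.π w ≠ 0 → ∀ a ∈ S', ρ.π a ≠ 0 := by
    intro S'
    induction S' using Finset.induction_on with
    | empty => 
      intro _
      obtain ⟨a, ha⟩ := hne
      exact ⟨a, ha, by simp⟩
    | insert a S' ha ih =>
      intro hsub
      obtain ⟨w, hw, hρ⟩ := ih (fun x hx => hsub (Finset.mem_insert_of_mem hx))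
      have haT := hST a (hsub (Finset.mem_insert_self _ _))
      have : ∃ x, T a * T x * T w ≠ 0 := by
        by_contra hcon
        push Not at hcon
        rcases hprime a w hcon with h | h
        · exact haT h
        · exact hw h
      obtain ⟨x, hx⟩ := this
      refine ⟨a * x * w, by simpa using hx, ?_⟩
      intro ρ hρw b hb
      letI := ρ.normH
      letI := ρ.ipsH
      letI := ρ.csH
      rw [map_mul, map_mul] at hρw
      rcases Finset.mem_insert.1 hb with rfl | hb
      · intro h
        rw [h] at hρw
        simp at hρw
      · refine hρ ρ ?_ b hb
        intro h
        rw [h] at hρw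
        simp at hρw
  obtain ⟨w, hw, hρ⟩ := h1 S (Finset.Subset.refl _)
  have hw0 : w ≠ 0 := by rintro rfl; simp at hw
  obtain ⟨ρ, hρw⟩ := exists_irreducible w hw0
  have hρ' := hρ ρ hρw
  letI := ρ.normH
  letI := ρ.ipsH
  letI := ρ.csH
  obtain ⟨hfd, hfr⟩ := hn ρ
  have h2 : ∀ a : S, ∃ v, ρ.π a v ≠ 0 := by
    intro a
    by_contra hcon
    push Not at hcon
    exact hρ' a a.2 (ContinuousLinearMap.ext hcon)
  choose v hv using h2
  have hli : LinearIndependent ℂ (fun a : S => ρ.π a (v a)) := by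
    refine linearIndependent_of_ne_zero_of_inner_eq_zero hv ?_
    intro a b hab
    have hsa : star (a : A) = a := (hS0 a a.2).isSelfAdjoint.star_eq
    rw [← ContinuousLinearMap.adjoint_inner_right, ← ContinuousLinearMap.star_eq_adjoint,
      ← map_star, hsa]
    have : ρ.π a (ρ.π b (v b)) = (ρ.π ((a : A) * b)) (v b) := by rw [map_mul]; rfl
    rw [this, hSo a a.2 b b.2 (fun h => hab (Subtype.ext h))]
    simp
  have := hli.fintype_card_le_finrank
  simp at this
  omega

/-- Functions `x (x-s)_+` and `x^2 (s-x)_+`. -/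
lemma T_sq_eq (T : A →ₙₐ[ℂ] R) (hT : Continuous T) (K : Set A)
    (hKmul : ∀ a ∈ K, ∀ x, a * x = x * a → a * x ∈ K)
    (hstar : ∀ a ∈ K, ∀ b ∈ K, 0 ≤ a → 0 ≤ b → a * b = 0 → T a = 0 ∨ T b = 0)
    (a : A) (ha : 0 ≤ a) (haK : a ∈ K) :
    ∃ t : ℝ, 0 ≤ t ∧ T a * T a = (t : ℂ) • T a := by
  have hs : IsSelfAdjoint a := ha.isSelfAdjoint
  have hq0 : ∀ x ∈ quasispectrum ℝ a, 0 ≤ x := quasispectrum_nonneg_of_nonneg a ha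
  have hq : ∀ x ∈ quasispectrum ℝ a, x ≤ ‖a‖ := by
    intro x hx
    have := NonUnitalIsometricContinuousFunctionalCalculus.norm_quasispectrum_le (𝕜 := ℝ) a hx hs
    exact (le_abs_self x).trans this
  let c : ℝ → A := fun s => cfcₙ (fun x : ℝ => x * max (x - s) 0) a
  let d : ℝ → A := fun s => cfcₙ (fun x : ℝ => x * (x * max (s - x) 0)) a
  have hlipc : Continuous c := by
    refine (LipschitzWith.of_dist_le_mul (K := ⟨‖a‖, norm_nonneg _⟩) fun s s' => ?_).continuous
    simp only [c]
    rw [dist_eq_norm, ← cfcₙ_sub _ _ a (by fun_prop) (by simp) (by fun_prop) (by simp)]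
    refine norm_cfcₙ_le fun x hx => ?_
    have h1 := hq0 x hx
    have h2 := hq x hx
    rw [← mul_sub, norm_mul, Real.norm_eq_abs, abs_of_nonneg h1]
    have h3 : ‖max (x - s) 0 - max (x - s') 0‖ ≤ dist s s' := by
      refine (abs_max_sub_max_le_abs _ _ _).trans ?_
      rw [Real.dist_eq, abs_sub_comm s s']
      exact le_of_eq (by congr 1; ring)
    exact mul_le_mul h2 h3 (norm_nonneg _) (norm_nonneg _)
  have hlipd : Continuous d := by
    refine (LipschitzWith.of_dist_le_mul (K := ⟨‖a‖ * ‖a‖, mul_nonneg (norm_nonneg _) (norm_nonneg _)⟩) fun s s' => ?_).continuous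
    simp only [d]
    rw [dist_eq_norm, ← cfcₙ_sub _ _ a (by fun_prop) (by simp) (by fun_prop) (by simp)]
    refine norm_cfcₙ_le fun x hx => ?_
    have h1 := hq0 x hx
    have h2 := hq x hx
    rw [← mul_sub, ← mul_sub, ← mul_assoc, norm_mul, norm_mul, Real.norm_eq_abs, abs_of_nonneg h1]
    have h3 : ‖max (s - x) 0 - max (s' - x) 0‖ ≤ dist s s' := by
      refine (abs_max_sub_max_le_abs _ _ _).trans ?_
      rw [Real.dist_eq]
      exact le_of_eq (by congr 1; ring)
    exact mul_le_mul (mul_le_mul h2 h2 h1 (norm_nonneg _)) h3 (norm_nonneg _) (mul_nonneg (norm_nonneg _) (norm_nonneg _))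
  have hcom : ∀ f : ℝ → ℝ, a * cfcₙ f a = cfcₙ f a * a := by
    intro f
    have := cfcₙ_commute_cfcₙ (fun x : ℝ => x) f a
    rw [cfcₙ_id' ℝ a] at this
    exact this
  have hcK : ∀ s, 0 ≤ s → c s ∈ K := by
    intro s h
    have : c s = a * cfcₙ (fun x : ℝ => max (x - s) 0) a := by
      simp only [c]
      rw [cfcₙ_mul (fun x : ℝ => x) (fun x => max (x - s) 0) a (by fun_prop) rfl (by fun_prop)
        (by simp [h]), cfcₙ_id' ℝ a]
    rw [this]
    exact hKmul a haK _ (hcom _)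
  have hdK : ∀ s, d s ∈ K := by
    intro s
    have : d s = a * cfcₙ (fun x : ℝ => x * max (s - x) 0) a := by
      simp only [d]
      rw [cfcₙ_mul (fun x : ℝ => x) (fun x => x * max (s - x) 0) a (by fun_prop) rfl (by fun_prop)
        (by simp), cfcₙ_id' ℝ a]
    rw [this]
    exact hKmul a haK _ (hcom _)
  have hc0 : ∀ s, 0 ≤ c s := fun s => cfcₙ_nonneg fun x hx =>
    mul_nonneg (hq0 x hx) (le_max_right _ _)
  have hd0 : ∀ s, 0 ≤ d s := fun s => cfcₙ_nonneg fun x hx =>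
    mul_nonneg (hq0 x hx) (mul_nonneg (hq0 x hx) (le_max_right _ _))
  have hcd : ∀ s, c s * d s = 0 := by
    intro s
    simp only [c, d]
    rw [← cfcₙ_mul _ _ a (by fun_prop) (by simp) (by fun_prop) (by simp)]
    rw [← cfcₙ_zero (R := ℝ) a]
    refine cfcₙ_congr fun x hx => ?_
    rcases le_total x s with h | h
    · simp [max_eq_right (by linarith : x - s ≤ 0)]
    · simp [max_eq_right (by linarith : s - x ≤ 0)]
  have halt : ∀ s, 0 ≤ s → T (c s) = 0 ∨ T (d s) = 0 := fun s h =>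
    hstar _ (hcK s h) _ (hdK s) (hc0 s) (hd0 s) (hcd s)
  let Z : Set ℝ := {s | 0 ≤ s ∧ T (c s) = 0}
  have hZc : IsClosed Z := by
    refine IsClosed.inter (isClosed_Ici (a := (0 : ℝ))) (isClosed_eq (hT.comp hlipc) continuous_const)
  have hZne : Z.Nonempty := by
    refine ⟨‖a‖, norm_nonneg _, ?_⟩
    have : c ‖a‖ = 0 := by
      simp only [c]
      rw [← cfcₙ_zero (R := ℝ) a]
      refine cfcₙ_congr fun x hx => ?_
      simp [max_eq_right (by linarith [hq x hx] : x - ‖a‖ ≤ 0)]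
    rw [this, map_zero]
  have hZb : BddBelow Z := ⟨0, fun s hs => hs.1⟩
  set t := sInf Z with ht
  have htZ : t ∈ Z := hZc.csInf_mem hZne hZb
  have htd : T (d t) = 0 := by
    rcases htZ.1.eq_or_lt with h | h
    · have : d t = 0 := by
        simp only [d]
        rw [← cfcₙ_zero (R := ℝ) a]
        refine cfcₙ_congr fun x hx => ?_
        simp [max_eq_right (by linarith [hq0 x hx] : t - x ≤ 0)]
      rw [this, map_zero]
    · have hcl : IsClosed {s | T (d s) = 0} := isClosed_eq (hT.comp hlipd) continuous_const
      have hsub : Set.Ico 0 t ⊆ {s | T (d s) = 0} := by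
        intro s hs
        rcases halt s hs.1 with h1 | h1
        · exact absurd (csInf_le hZb ⟨hs.1, h1⟩) (not_le.2 hs.2)
        · exact h1
      have := hcl.closure_subset_iff.2 hsub
      rw [closure_Ico h.ne] at this
      exact this ⟨h.le, le_rfl⟩
  refine ⟨t, htZ.1, ?_⟩
  let z : A := a * a - (t : ℂ) • a
  have hz : IsSelfAdjoint z := by
    have h1 : (t : ℂ) • a = t • a := Complex.coe_smul _ _
    simp only [z]
    rw [h1]
    exact ((IsSelfAdjoint.all t).smul hs |> (IsSelfAdjoint.sub (by simp [IsSelfAdjoint, hs.star_eq])))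
  have haz : a * z = a * c t - d t := by
    have h1 : (t : ℂ) • a = t • a := Complex.coe_smul _ _
    simp only [z]
    rw [h1]
    have e1 : a * (a * a - t • a) = cfcₙ (fun x : ℝ => x * (x * x - t * x)) a := by
      rw [cfcₙ_mul (fun x : ℝ => x) (fun x => x * x - t * x) a (by fun_prop) rfl (by fun_prop) (by simp),
        cfcₙ_sub (fun x : ℝ => x * x) (fun x => t * x) a (by fun_prop) (by simp) (by fun_prop) (by simp),
        cfcₙ_mul (fun x : ℝ => x) (fun x => x) a, cfcₙ_const_mul t (fun x => x) a, cfcₙ_id' ℝ a]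
    have e2 : a * c t = cfcₙ (fun x : ℝ => x * (x * max (x - t) 0)) a := by
      rw [cfcₙ_mul (fun x : ℝ => x) (fun x => x * max (x - t) 0) a (by fun_prop) rfl (by fun_prop)
        (by simp), cfcₙ_id' ℝ a]
    rw [e1, e2]
    simp only [d]
    rw [← cfcₙ_sub _ _ a (by fun_prop) (by simp) (by fun_prop) (by simp)]
    refine cfcₙ_congr fun x hx => ?_
    rcases le_total x t with h | h
    · simp [max_eq_right (by linarith : x - t ≤ 0), max_eq_left (by linarith : 0 ≤ t - x)]; try ring
    · rw [max_eq_right (by linarith : t - x ≤ 0), max_eq_left (by linarith : 0 ≤ x - t)]; ring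
  have hTaz : T (a * z) = 0 := by
    rw [haz, map_sub, map_mul, htZ.2, htd]; simp
  have hTz : T z = 0 := by
    refine T_eq_zero_of_sq T hT z hz ?_
    have : z * z = a * (a * z) - (t : ℂ) • (a * z) := by
      nth_rewrite 1 [show z = a * a - (t : ℂ) • a from rfl]
      rw [sub_mul, smul_mul_assoc, mul_assoc]
    rw [this, map_sub, map_smul, map_mul, hTaz]; simp
  have := hTz
  simp only [z, map_sub, map_smul, map_mul] at this
  exact sub_eq_zero.1 this

end PartFour

section PartFive
open scoped ComplexOrder InnerProductSpace ComplexStarModule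

variable {A : Type u} [NonUnitalCStarAlgebra A] [PartialOrder A] [StarOrderedRing A]
  {R : Type*} [NormedRing R] [NormedAlgebra ℂ R]

lemma exists_minimal (n : ℕ)
    (hn : ∀ ρ : IrreducibleRepOn A, letI := ρ.normH; letI := ρ.ipsH
      FiniteDimensional ℂ ρ.H ∧ Module.finrank ℂ ρ.H ≤ n)
    (T : A →ₙₐ[ℂ] R) (hT : Continuous T) (hne : ∃ a, T a ≠ 0)
    (hprime : ∀ a c, (∀ x, T a * T x * T c = 0) → T a = 0 ∨ T c = 0) :
    ∃ (p : A) (ω : A →ₚ[ℂ] ℂ), 0 ≤ p ∧ T p ≠ 0 ∧ T p * T p = T p ∧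
      ∀ y, T p * T y * T p = ω y • T p := by
  classical
  have hsq0 : ∀ a : A, IsSelfAdjoint a → a * a = 0 → a = 0 := by
    intro a ha h
    rw [← CStarRing.star_mul_self_eq_zero_iff, ha.star_eq, h]
  -- families
  let F : Set (Finset A) := {S | (∀ a ∈ S, 0 ≤ a) ∧ (∀ a ∈ S, T a ≠ 0) ∧
    ∀ a ∈ S, ∀ b ∈ S, a ≠ b → a * b = 0}
  have hFcard : ∀ S ∈ F, S.card ≤ n := fun S hS =>
    orth_family_card n hn T hprime S hS.1 hS.2.1 hS.2.2
  obtain ⟨h0, h0p, h0T⟩ : ∃ h : A, 0 ≤ h ∧ T h ≠ 0 := by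
    by_contra hcon
    push Not at hcon
    obtain ⟨a, ha⟩ := hne
    refine ha ?_
    have : a ∈ Submodule.span ℂ {a : A | 0 ≤ a} := by
      rw [CStarAlgebra.span_nonneg]; trivial
    induction this using Submodule.span_induction with
    | mem x hx => exact hcon x hx
    | zero => simp
    | add x y _ _ hx hy => 
      by_cases h1 : T x = 0
      · by_cases h2 : T y = 0
        · simp [h1, h2]
        · exact absurd (hy h2) h2
      · exact absurd (hx h1) h1
    | smul c x _ hx => 
      by_cases h1 : T x = 0
      · simp [h1]
      · exact absurd (hx h1) h1
  have hFne : ∃ m, ∃ S ∈ F, S.card = m ∧ 1 ≤ m := by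
    refine ⟨1, {h0}, ⟨by simpa using h0p, by simpa using h0T, by simp⟩, by simp, le_rfl⟩
  obtain ⟨S, hSF, hS1, hSmax⟩ : ∃ S ∈ F, 1 ≤ S.card ∧ ∀ S' ∈ F, S'.card ≤ S.card := by
    let P : ℕ → Prop := fun m => ∃ S ∈ F, S.card = m ∧ 1 ≤ m
    have hP : ∃ m, P m := hFne
    have hPb : ∀ m, P m → m ≤ n := by
      rintro m ⟨S, hS, rfl, _⟩; exact hFcard S hS
    obtain ⟨m0, hm0⟩ := hP
    have hspec := Nat.findGreatest_spec (P := P) (hPb m0 hm0) hm0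
    obtain ⟨S, hS, hc, h1⟩ := hspec
    refine ⟨S, hS, by omega, fun S' hS' => ?_⟩
    by_cases h : 1 ≤ S'.card
    · rw [hc]
      exact Nat.le_findGreatest (hFcard S' hS') ⟨S', hS', rfl, h⟩
    · omega
  obtain ⟨a0, ha0⟩ : S.Nonempty := Finset.card_pos.1 hS1
  let S' := S.erase a0
  have hS'c : S'.card + 1 = S.card := Finset.card_erase_add_one ha0
  have hS'S : ∀ h ∈ S', h ∈ S ∧ h ≠ a0 := fun h hh =>
    ⟨Finset.mem_of_mem_erase hh, Finset.ne_of_mem_erase hh⟩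
  let K : Set A := {a | ∀ h ∈ S', a * h = 0 ∧ h * a = 0}
  have hK0 : ∀ a ∈ K, T a ≠ 0 → 0 ≤ a → a ∉ S' := by
    intro a ha hTa hap haS
    have h1 := hsq0 a hap.isSelfAdjoint (ha a haS).1
    rw [h1, map_zero] at hTa
    exact hTa rfl
  have hstar : ∀ a ∈ K, ∀ b ∈ K, 0 ≤ a → 0 ≤ b → a * b = 0 → T a = 0 ∨ T b = 0 := by
    intro a ha b hb hap hbp hab
    by_contra hcon
    push Not at hcon
    obtain ⟨hTa, hTb⟩ := hcon
    have hba : b * a = 0 := by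
      have := congrArg star hab
      rw [star_mul, hap.isSelfAdjoint.star_eq, hbp.isSelfAdjoint.star_eq, star_zero] at this
      exact this
    have hne' : a ≠ b := by
      rintro rfl
      have h1 := hsq0 a hap.isSelfAdjoint hab
      rw [h1, map_zero] at hTa
      exact hTa rfl
    have haS := hK0 a ha hTa hap
    have hbS := hK0 b hb hTb hbp
    have hmem : insert a (insert b S') ∈ F := by
      refine ⟨?_, ?_, ?_⟩
      · intro x hx
        rcases Finset.mem_insert.1 hx with rfl | hx
        · exact hap
        rcases Finset.mem_insert.1 hx with rfl | hx
        · exact hbp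
        exact hSF.1 x (hS'S x hx).1
      · intro x hx
        rcases Finset.mem_insert.1 hx with rfl | hx
        · exact hTa
        rcases Finset.mem_insert.1 hx with rfl | hx
        · exact hTb
        exact hSF.2.1 x (hS'S x hx).1
      · intro x hx y hy hxy
        rcases Finset.mem_insert.1 hx with rfl | hx1
        · rcases Finset.mem_insert.1 hy with rfl | hy
          · exact absurd rfl hxy
          rcases Finset.mem_insert.1 hy with rfl | hy
          · exact hab
          exact (ha y hy).1
        rcases Finset.mem_insert.1 hx1 with rfl | hx2
        · rcases Finset.mem_insert.1 hy with rfl | hy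
          · exact hba
          rcases Finset.mem_insert.1 hy with rfl | hy
          · exact absurd rfl hxy
          exact (hb y hy).1
        · rcases Finset.mem_insert.1 hy with rfl | hy
          · exact (ha x hx2).2
          rcases Finset.mem_insert.1 hy with rfl | hy
          · exact (hb x hx2).2
          exact hSF.2.2 x (hS'S x hx2).1 y (hS'S y hy).1 hxy
    have h1 := hSmax _ hmem
    rw [Finset.card_insert_of_notMem (by simp [haS, hne']),
      Finset.card_insert_of_notMem hbS] at h1
    omega
  have hKmul : ∀ a ∈ K, ∀ x, a * x = x * a → a * x ∈ K := by
    intro a ha x hx h hh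
    refine ⟨?_, ?_⟩
    · rw [hx, mul_assoc, (ha h hh).1, mul_zero]
    · rw [← mul_assoc, (ha h hh).2, zero_mul]
  have hKadd : ∀ a ∈ K, ∀ b ∈ K, a + b ∈ K := by
    intro a ha b hb h hh
    simp [add_mul, mul_add, ha h hh, hb h hh]
  have hKsmul : ∀ (c : ℝ), ∀ a ∈ K, c • a ∈ K := by
    intro c a ha h hh
    simp [smul_mul_assoc, mul_smul_comm, ha h hh]
  have hKcorner : ∀ a ∈ K, ∀ x, a * x * a ∈ K := by
    intro a ha x h hh
    refine ⟨?_, ?_⟩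
    · rw [mul_assoc, (ha h hh).1, mul_zero]
    · rw [← mul_assoc, ← mul_assoc, (ha h hh).2, zero_mul, zero_mul]
  have hTr : ∀ (c : ℝ) (a : A), T (c • a) = (c : ℂ) • T a := by
    intro c a
    rw [← Complex.coe_smul, map_smul]
  have ha0K : a0 ∈ K := by
    intro h hh
    obtain ⟨h1, h2⟩ := hS'S h hh
    exact ⟨hSF.2.2 _ ha0 _ h1 h2.symm, hSF.2.2 _ h1 _ ha0 h2⟩
  obtain ⟨t, ht0, ht⟩ := T_sq_eq T hT K hKmul hstar a0 (hSF.1 _ ha0) ha0K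
  have hTa0 : T a0 ≠ 0 := hSF.2.1 _ ha0
  have htpos : 0 < t := by
    refine lt_of_le_of_ne ht0 ?_
    rintro rfl
    refine hTa0 (T_eq_zero_of_sq T hT a0 (hSF.1 _ ha0).isSelfAdjoint ?_)
    rw [map_mul, ht]; simp
  let p : A := t⁻¹ • a0
  have hp0 : 0 ≤ p := smul_nonneg (by positivity) (hSF.1 _ ha0)
  have hps : star p = p := hp0.isSelfAdjoint.star_eq
  have hpK : p ∈ K := hKsmul _ _ ha0K
  have htc : (t : ℂ) ≠ 0 := by exact_mod_cast htpos.ne'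
  have hTp : T p ≠ 0 := by
    simp only [p]; rw [hTr]
    exact smul_ne_zero (by simpa using htc) hTa0
  have hidem : T p * T p = T p := by
    simp only [p]; rw [hTr, smul_mul_smul_comm, ht, smul_smul]
    congr 1
    push_cast
    field_simp
  clear_value p
  have hsa : ∀ y : A, IsSelfAdjoint y → ∃ r : ℝ, T p * T y * T p = (r : ℂ) • T p := by
    intro y hy
    let c : A := p * y * p + ‖y‖ • (p * p)
    have hc0 : 0 ≤ c := by
      have := CStarAlgebra.star_left_conjugate_le_norm_smul (a := p) (b := -y) hy.neg
      rw [hps, norm_neg] at this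
      have h2 : -(p * y * p) ≤ ‖y‖ • (p * p) := by simpa using this
      have h3 := neg_le_iff_add_nonneg'.1 h2
      exact h3
    have hppK : p * p ∈ K := hKmul p hpK p rfl
    have hcK : c ∈ K := hKadd _ (hKcorner p hpK y) _ (hKsmul _ _ hppK)
    obtain ⟨t1, ht1, e1⟩ := T_sq_eq T hT K hKmul hstar c hc0 hcK
    obtain ⟨t2, ht2, e2⟩ := T_sq_eq T hT K hKmul hstar (c + p) (add_nonneg hc0 hp0) (hKadd _ hcK _ hpK)
    have hTc : T c = T p * T y * T p + (‖y‖ : ℂ) • T p := by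
      simp only [c]
      rw [map_add, hTr, map_mul, map_mul, map_mul, hidem]
    have hpc : T p * T c = T c := by
      rw [hTc, mul_add, mul_smul_comm, hidem, ← mul_assoc, ← mul_assoc, hidem]
    have hcp : T c * T p = T c := by
      rw [hTc, add_mul, smul_mul_assoc, hidem, mul_assoc, hidem]
    rw [map_add, add_mul, mul_add, mul_add, e1, hpc, hcp, hidem] at e2
    have e3 : ((t1 + 2 - t2 : ℝ) : ℂ) • T c = ((t2 - 1 : ℝ) : ℂ) • T p := by
      push_cast
      rw [sub_smul, add_smul, sub_smul, two_smul, one_smul, sub_eq_sub_iff_add_eq_add,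
        ← sub_eq_zero]
      rw [← sub_eq_zero] at e2
      rw [← e2, smul_add]
      abel
    have hne2 : t1 + 2 - t2 ≠ 0 := by
      intro h
      rw [h] at e3
      have h2 : t2 - 1 ≠ 0 := by intro h3; linarith
      rw [Complex.ofReal_zero, zero_smul, eq_comm, smul_eq_zero] at e3
      rcases e3 with h3 | h3
      · exact h2 (by exact_mod_cast h3)
      · exact hTp h3
    refine ⟨(t2 - 1) / (t1 + 2 - t2) - ‖y‖, ?_⟩
    have e4 : T c = (((t2 - 1) / (t1 + 2 - t2) : ℝ) : ℂ) • T p := by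
      have hc : ((t1 + 2 - t2 : ℝ) : ℂ) ≠ 0 := by exact_mod_cast hne2
      have := congrArg (fun x => ((t1 + 2 - t2 : ℝ) : ℂ)⁻¹ • x) e3
      simp only [smul_smul, inv_mul_cancel₀ hc, one_smul] at this
      rw [this]
      congr 1
      push_cast
      ring
    have e5 : T p * T y * T p = T c - (‖y‖ : ℂ) • T p := by rw [hTc]; abel
    rw [e5, e4, ← sub_smul]
    push_cast
    rfl
  have hpos : ∀ y : A, 0 ≤ y → ∃ r : ℝ, 0 ≤ r ∧ T p * T y * T p = (r : ℂ) • T p := by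
    intro y hy
    obtain ⟨r, hr⟩ := hsa y hy.isSelfAdjoint
    refine ⟨r, ?_, hr⟩
    have h1 : 0 ≤ p * y * p := conjugate_nonneg_of_nonneg hy hp0
    obtain ⟨t1, ht1, e1⟩ := T_sq_eq T hT K hKmul hstar _ h1 (hKcorner p hpK y)
    rw [map_mul, map_mul, hr, smul_mul_smul_comm, hidem, smul_smul] at e1
    rw [← sub_eq_zero, ← sub_smul, smul_eq_zero] at e1
    rcases e1 with h | h
    · have h2 : r * r = t1 * r := by
        have : ((r * r - t1 * r : ℝ) : ℂ) = 0 := by push_cast; exact h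
        have := Complex.ofReal_eq_zero.1 this
        linarith
      by_contra hneg
      push Not at hneg
      nlinarith
    · exact absurd h hTp
  have hall : ∀ y : A, ∃ c : ℂ, T p * T y * T p = c • T p := by
    intro y
    obtain ⟨r1, h1⟩ := hsa (ℜ y) (ℜ y).2
    obtain ⟨r2, h2⟩ := hsa (ℑ y) (ℑ y).2
    refine ⟨r1 + Complex.I * r2, ?_⟩
    conv_lhs => rw [← realPart_add_I_smul_imaginaryPart y]
    rw [map_add, map_smul, mul_add, add_mul, mul_smul_comm, smul_mul_assoc, h1, h2, add_smul,
      smul_smul]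
  choose ω hω using hall
  have huniq : ∀ c d : ℂ, c • T p = d • T p → c = d := fun c d h =>
    smul_left_injective ℂ hTp h
  let ωl : A →ₗ[ℂ] ℂ :=
    { toFun := ω
      map_add' := fun x y => huniq _ _ (by
        rw [← hω, map_add, mul_add, add_mul, hω, hω, add_smul])
      map_smul' := fun c x => huniq _ _ (by
        rw [← hω, map_smul, mul_smul_comm, smul_mul_assoc, hω, smul_smul]; rfl) }
  refine ⟨p, PositiveLinearMap.mk₀ ωl fun y hy => ?_, hp0, hTp, hidem, hω⟩
  obtain ⟨r, hr, h⟩ := hpos y hy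
  rw [hω] at h
  have : ω y = r := huniq _ _ h
  change 0 ≤ ω y
  rw [this]
  exact_mod_cast hr

end PartFive

section PartSix
open scoped ComplexOrder InnerProductSpace

variable {A : Type u} [NonUnitalCStarAlgebra A] [PartialOrder A] [StarOrderedRing A]
  {R : Type*} [NormedRing R] [NormedAlgebra ℂ R]

lemma gns_fd (n : ℕ)
    (hn : ∀ ρ : IrreducibleRepOn A, letI := ρ.normH; letI := ρ.ipsH
      FiniteDimensional ℂ ρ.H ∧ Module.finrank ℂ ρ.H ≤ n)
    (T : A →ₙₐ[ℂ] R)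
    (hprime : ∀ a c, (∀ x, T a * T x * T c = 0) → T a = 0 ∨ T c = 0)
    (p : A) (ω : A →ₚ[ℂ] ℂ) (hp : 0 ≤ p) (hTp : T p ≠ 0) (hidem : T p * T p = T p)
    (hω : ∀ y, T p * T y * T p = ω y • T p) :
    ∃ (k : ℕ) (x : Fin k → A), (∀ i j, ω (star (x i) * x j) = if i = j then 1 else 0) ∧
      ∀ y, T y * T p = ∑ i, ω (star (x i) * y) • (T (x i) * T p) := by
  have huniq : ∀ c d : ℂ, c • T p = d • T p → c = d := fun c d h =>
    smul_left_injective ℂ hTp h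
  let q : A →ₗ[ℂ] ω.GNS :=
    { toFun := fun a => ((ω.toPreGNS a : ω.PreGNS) : ω.GNS)
      map_add' := fun a b => by rw [map_add, UniformSpace.Completion.coe_add]
      map_smul' := fun c a => by rw [map_smul, UniformSpace.Completion.coe_smul]; rfl }
  have hq : ∀ a, q a = ((ω.toPreGNS a : ω.PreGNS) : ω.GNS) := fun a => rfl
  have hqd : DenseRange q :=
    UniformSpace.Completion.denseRange_coe.comp ω.toPreGNS.surjective.denseRange
        (UniformSpace.Completion.continuous_coe _)
  have hqi : ∀ a b, ⟪q a, q b⟫_ℂ = ω (star a * b) := by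
    intro a b
    rw [hq, hq, UniformSpace.Completion.inner_coe, PositiveLinearMap.preGNS_inner_def]
    simp
  set π := ω.gnsNonUnitalStarAlgHom with hπ
  have hπq : ∀ a b, π a (q b) = q (a * b) := by
    intro a b
    simp [π, hq]
  have hstar : ∀ a (v w : ω.GNS), ⟪π a v, w⟫_ℂ = ⟪v, π (star a) w⟫_ℂ := by
    intro a v w
    rw [map_star, ContinuousLinearMap.star_eq_adjoint, ContinuousLinearMap.adjoint_inner_right]
  -- null vectors
  have hW1 : ∀ w, q w = 0 → T w * T p = 0 := by
    intro w hw
    have h1 : ∀ a, T p * T a * T (w * p) = 0 := by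
      intro a
      have h2 : ω (a * w) = 0 := by
        have := hqi (star a) w
        rw [hw, inner_zero_right, star_star] at this
        exact this.symm
      have h3 := hω (a * w)
      rw [h2, zero_smul, map_mul] at h3
      rw [map_mul, ← h3]
      noncomm_ring
    rcases hprime p (w * p) h1 with h | h
    · exact absurd h hTp
    · rw [← map_mul]; exact h
  have hW2 : ∀ w, T w * T p = 0 → q w = 0 := by
    intro w hw
    have h3 := hω (star w * w)
    rw [map_mul, mul_assoc, mul_assoc, hw, mul_zero, mul_zero] at h3
    have h4 : ω (star w * w) = 0 := huniq _ _ (by rw [← h3, zero_smul])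
    rw [← hqi] at h4
    exact inner_self_eq_zero.1 h4
  let ξ := q p
  have hqx : ∀ x, q x = π x ξ := by
    intro x
    rw [hπq, ← sub_eq_zero, ← map_sub]
    refine hW2 _ ?_
    rw [map_sub, map_mul, sub_mul, mul_assoc, hidem, sub_self]
  have hωp : ∀ x, ω (p * x) = ω x := by
    intro x
    apply huniq
    rw [← hω, ← hω, map_mul, ← mul_assoc, hidem]
  have hπp : ∀ v, π p v = ⟪ξ, v⟫_ℂ • ξ := by
    intro v
    refine hqd.induction_on (p := fun v => π p v = ⟪ξ, v⟫_ℂ • ξ) v ?_ ?_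
    · exact isClosed_eq (by fun_prop) (by fun_prop)
    · intro x
      rw [hπq, hqi, hp.isSelfAdjoint.star_eq, hωp, ← map_smul, ← sub_eq_zero, ← map_sub]
      refine hW2 _ ?_
      rw [map_sub, map_mul, map_smul, sub_mul, hω, smul_mul_assoc, hidem, sub_self]
  have hξ : ⟪ξ, ξ⟫_ℂ = 1 := by
    rw [hqi, hp.isSelfAdjoint.star_eq, hωp]
    apply huniq
    rw [← hω, hidem, hidem, one_smul]
  have hξ0 : ξ ≠ 0 := by
    intro h
    rw [h] at hξ
    simp at hξ
  let ρ : IrreducibleRepOn A :=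
    { H := ω.GNS
      π := π
      continuous := by
        letI : CStarAlgebra (ω.GNS →L[ℂ] ω.GNS) := {}
        exact AddMonoidHomClass.continuous_of_bound π 1 fun a => by
          rw [one_mul]; exact NonUnitalStarAlgHom.norm_apply_le π a
      nonzero := ⟨p, fun h => hξ0 (by
        have := hπp ξ
        rw [h, hξ, one_smul] at this
        exact this.symm)⟩
      irreducible := by
        intro S hS hinv
        rw [or_iff_not_imp_left]
        intro hbot
        obtain ⟨v, hv, hv0⟩ := (Submodule.ne_bot_iff S).1 hbot
        have : ∃ x, ⟪q x, v⟫_ℂ ≠ 0 := by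
          by_contra hcon
          push Not at hcon
          have : ∀ w, ⟪w, v⟫_ℂ = 0 := by
            intro w
            refine hqd.induction_on (p := fun w => ⟪w, v⟫_ℂ = 0) w ?_ hcon
            exact isClosed_eq (by fun_prop) (by fun_prop)
          exact hv0 (inner_self_eq_zero.1 (this v))
        obtain ⟨x, hx⟩ := this
        rw [hqx, hstar] at hx
        have h1 : ⟪ξ, π (star x) v⟫_ℂ • ξ ∈ S := by
          rw [← hπp]
          exact hinv _ _ (hinv _ _ hv)
        have h2 : ξ ∈ S := by
          have := S.smul_mem (⟪ξ, π (star x) v⟫_ℂ)⁻¹ h1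
          rwa [smul_smul, inv_mul_cancel₀ hx, one_smul] at this
        rw [eq_top_iff]
        intro w _
        refine hqd.induction_on (p := fun w => w ∈ S) w hS ?_
        intro y
        rw [hqx]
        exact hinv _ _ h2 }
  have hfd : FiniteDimensional ℂ ω.GNS := (hn ρ).1
  have hsurj : Function.Surjective q := by
    have h1 : (LinearMap.range q).topologicalClosure = LinearMap.range q :=
      IsClosed.submodule_topologicalClosure_eq (Submodule.closed_of_finiteDimensional _)
    have h2 : (LinearMap.range q).topologicalClosure = ⊤ :=
      (Submodule.dense_iff_topologicalClosure_eq_top).1 (by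
        have := hqd
        rw [DenseRange] at this
        rwa [LinearMap.coe_range])
    rw [← LinearMap.range_eq_top, ← h1, h2]
  let b := stdOrthonormalBasis ℂ ω.GNS
  choose x hx using fun i => hsurj (b i)
  refine ⟨_, x, ?_, ?_⟩
  · intro i j
    rw [← hqi, hx, hx]
    exact orthonormal_iff_ite.1 b.orthonormal i j
  · intro y
    have h1 : q (y - ∑ i, ω (star (x i) * y) • x i) = 0 := by
      rw [map_sub, map_sum, sub_eq_zero]
      conv_lhs => rw [← b.sum_repr' (q y)]
      refine Finset.sum_congr rfl fun i _ => ?_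
      rw [map_smul, ← hqi, hx]
    have h2 := hW1 _ h1
    rw [map_sub, sub_mul, sub_eq_zero] at h2
    rw [h2, map_sum, Finset.sum_mul]
    refine Finset.sum_congr rfl fun i _ => ?_
    rw [map_smul, smul_mul_assoc]

lemma exists_matrix_units (n : ℕ)
    (hn : ∀ ρ : IrreducibleRepOn A, letI := ρ.normH; letI := ρ.ipsH
      FiniteDimensional ℂ ρ.H ∧ Module.finrank ℂ ρ.H ≤ n)
    (T : A →ₙₐ[ℂ] R) (hT : Continuous T) (hne : ∃ a, T a ≠ 0)
    (hcyc : ∀ p, T p ≠ 0 → ∀ r : R, (∀ a, r * T a * T p = 0) → r = 0) :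
    ∃ (k : ℕ) (a : Fin k → Fin k → A) (ρ : A →⋆ₙₐ[ℂ] CStarMatrix (Fin k) (Fin k) ℂ),
      (∑ i, T (a i i) = 1) ∧
      (∀ i j l m, T (a i j) * T (a l m) = if j = l then T (a i m) else 0) ∧
      (∀ y, T y = ∑ i, ∑ j, ρ y i j • T (a i j)) ∧
      (∀ i j l m, ρ (a l m) i j = if i = l ∧ j = m then 1 else 0) := by
  have hprime : ∀ a c, (∀ x, T a * T x * T c = 0) → T a = 0 ∨ T c = 0 := by
    intro a c h
    by_cases hc : T c = 0
    · exact Or.inr hc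
    · exact Or.inl (hcyc c hc _ h)
  obtain ⟨p, ω, hp, hTp, hidem, hω⟩ := exists_minimal n hn T hT hne hprime
  obtain ⟨k, x, hx, hy⟩ := gns_fd n hn T hprime p ω hp hTp hidem hω
  have huniq : ∀ c d : ℂ, c • T p = d • T p → c = d := fun c d h =>
    smul_left_injective ℂ hTp h
  have hsymm : ∀ a b, star (ω (star a * b)) = ω (star b * a) := by
    intro a b
    have := inner_conj_symm (𝕜 := ℂ) (ω.toPreGNS b) (ω.toPreGNS a)
    rw [PositiveLinearMap.preGNS_inner_def, PositiveLinearMap.preGNS_inner_def] at this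
    simpa using this
  have hω' : ∀ y z, T p * T y * (T z * T p) = ω (y * z) • T p := by
    intro y z
    rw [← hω, map_mul]; noncomm_ring
  let ρ : A →⋆ₙₐ[ℂ] CStarMatrix (Fin k) (Fin k) ℂ :=
    { toFun := fun y => CStarMatrix.ofMatrix (Matrix.of fun i j => ω (star (x i) * y * x j))
      map_smul' := fun c y => by
        ext i j
        simp [mul_smul_comm, smul_mul_assoc]
      map_zero' := by ext i j; simp
      map_add' := fun y z => by ext i j; simp [mul_add, add_mul]
      map_mul' := fun y z => by
        ext i j
        rw [CStarMatrix.mul_apply]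
        simp only [CStarMatrix.ofMatrix_apply, Matrix.of_apply]
        apply huniq
        have h1 := hω' (star (x i) * y) (z * x j)
        rw [hy (z * x j), Finset.mul_sum] at h1
        rw [show star (x i) * (y * z) * x j = star (x i) * y * (z * x j) by
          simp only [mul_assoc], ← h1, Finset.sum_smul]
        refine Finset.sum_congr rfl fun l _ => ?_
        rw [mul_smul_comm, hω', smul_smul, mul_comm, mul_assoc (star (x l))]
      map_star' := fun y => by
        ext i j
        rw [CStarMatrix.star_apply]
        simp only [CStarMatrix.ofMatrix_apply, Matrix.of_apply]
        rw [mul_assoc (star (x j)), hsymm, star_mul] }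
  have hρ : ∀ y i j, ρ y i j = ω (star (x i) * y * x j) := fun y i j => rfl
  have hya : ∀ y j l, T y * T (x j * p * star (x l)) =
      ∑ i, ρ y i j • T (x i * p * star (x l)) := by
    intro y j l
    rw [map_mul, map_mul, ← mul_assoc, ← mul_assoc, ← map_mul T y, hy, Finset.sum_mul]
    refine Finset.sum_congr rfl fun i _ => ?_
    rw [hρ, smul_mul_assoc, map_mul T (x i * p), map_mul T (x i), mul_assoc (star (x i))]
  have hG : ∑ i, T (x i * p * star (x i)) = 1 := by
    rw [← sub_eq_zero]
    refine hcyc p hTp _ fun a => ?_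
    rw [sub_mul, sub_mul, one_mul, Finset.sum_mul, Finset.sum_mul, sub_eq_zero, hy a]
    refine Finset.sum_congr rfl fun i _ => ?_
    rw [map_mul, map_mul]
    have := hω' (star (x i)) a
    calc T (x i) * T p * T (star (x i)) * T a * T p
        = T (x i) * (T p * T (star (x i)) * (T a * T p)) := by noncomm_ring
      _ = _ := by rw [this, mul_smul_comm]
  refine ⟨k, fun i j => x i * p * star (x j), ρ, hG, ?_, ?_, ?_⟩
  · intro i j l m
    simp only [map_mul]
    have := hω' (star (x j)) (x l)
    rw [hx] at this
    calc T (x i) * T p * T (star (x j)) * (T (x l) * T p * T (star (x m)))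
        = T (x i) * (T p * T (star (x j)) * (T (x l) * T p)) * T (star (x m)) := by noncomm_ring
      _ = _ := by rw [this]; split_ifs <;> simp
  · intro y
    calc T y = T y * ∑ i, T (x i * p * star (x i)) := by rw [hG, mul_one]
      _ = _ := by
        rw [Finset.mul_sum, Finset.sum_comm]
        refine Finset.sum_congr rfl fun j _ => ?_
        rw [hya]
  · intro i j l m
    rw [hρ]
    apply huniq
    have h1 := hω' (star (x i)) (x l)
    have h2 := hω' (star (x m)) (x j)
    rw [hx] at h1 h2
    rw [← hω]
    simp only [map_mul]
    calc _ = (T p * T (star (x i)) * (T (x l) * T p)) * (T (star (x m)) * T (x j) * T p) := by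
            noncomm_ring
      _ = (if i = l then (1 : ℂ) else 0) • (T p * T (star (x m)) * (T (x j) * T p)) := by
            rw [h1, smul_mul_assoc]; congr 1; noncomm_ring
      _ = _ := by
            rw [h2, smul_smul]; congr 1
            by_cases h : i = l <;> by_cases h' : j = m <;> simp [h, h', eq_comm]

end PartSix

section PartSeven

lemma norm_le_one_of_proj {D : Type*} [NonUnitalCStarAlgebra D] (e : D) (h : star e * e = e) :
    ‖e‖ ≤ 1 := by
  have := CStarRing.norm_star_mul_self (x := e)
  rw [h] at this
  nlinarith [norm_nonneg e]

lemma row_norm_le {ι : Type*} [Fintype ι] [DecidableEq ι] {D : Type*} [CStarAlgebra D]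
    [PartialOrder D] [StarOrderedRing D] (I0 : ι) (α : ι → ℂ) :
    ‖(CStarMatrix.ofMatrix (Matrix.of fun I J => if I = I0 then α J • (1 : D) else 0) :
      CStarMatrix ι ι D)‖ ≤ Real.sqrt (∑ i, ‖α i‖ ^ 2) := by
  set M : CStarMatrix ι ι D :=
    CStarMatrix.ofMatrix (Matrix.of fun I J => if I = I0 then α J • (1 : D) else 0) with hM
  let e : CStarMatrix ι ι D :=
    CStarMatrix.ofMatrix (Matrix.of fun I J => if I = I0 ∧ J = I0 then (1 : D) else 0)
  have hes : star e = e := by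
    ext I J
    rw [CStarMatrix.star_apply]
    simp only [e, CStarMatrix.ofMatrix_apply, Matrix.of_apply]
    by_cases h1 : I = I0 <;> by_cases h2 : J = I0 <;> simp [h1, h2]
  have he : ‖e‖ ≤ 1 := by
    refine norm_le_one_of_proj e ?_
    rw [hes]
    ext I J
    rw [CStarMatrix.mul_apply]
    simp only [e, CStarMatrix.ofMatrix_apply, Matrix.of_apply]
    by_cases h1 : I = I0 <;> by_cases h2 : J = I0 <;> simp [h1, h2]
  have hMM : M * star M = ((∑ i, ‖α i‖ ^ 2 : ℝ) : ℂ) • e := by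
    ext I J
    rw [CStarMatrix.mul_apply]
    simp only [CStarMatrix.star_apply, CStarMatrix.smul_apply, e, M, CStarMatrix.ofMatrix_apply, Matrix.of_apply]
    by_cases h1 : I = I0 <;> by_cases h2 : J = I0 <;> simp [h1, h2]
    rw [Finset.sum_smul]
    refine Finset.sum_congr rfl fun i _ => ?_
    rw [smul_smul]
    congr 1
    exact Complex.conj_mul' (α i)
  have h1 := CStarRing.norm_self_mul_star (x := M)
  rw [hMM, norm_smul] at h1
  have h2 : ‖((∑ i, ‖α i‖ ^ 2 : ℝ) : ℂ)‖ = ∑ i, ‖α i‖ ^ 2 := by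
    rw [Complex.norm_real, Real.norm_eq_abs, abs_of_nonneg (by positivity)]
  rw [h2] at h1
  apply Real.le_sqrt_of_sq_le
  rw [sq, ← h1]
  have : 0 ≤ ∑ i, ‖α i‖ ^ 2 := by positivity
  nlinarith

lemma slice_bound {A B D : Type*} [NonUnitalCStarAlgebra A] [PartialOrder A] [StarOrderedRing A]
    [NonUnitalCStarAlgebra B] [PartialOrder B] [StarOrderedRing B]
    [CStarAlgebra D] [PartialOrder D] [StarOrderedRing D]
    (f : A →⋆ₙₐ[ℂ] D) (g : B →⋆ₙₐ[ℂ] D) (p q : ℕ) (α β : Fin p × Fin q → ℂ)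
    (v : Matrix (Fin p) (Fin p) A) (w : Matrix (Fin q) (Fin q) B) :
    ‖∑ I : Fin p × Fin q, ∑ J : Fin p × Fin q,
      (α I * β J) • (f (v I.1 J.1) * g (w I.2 J.2))‖ ≤
      Real.sqrt (∑ i, ‖α i‖ ^ 2) * ‖(CStarMatrix.ofMatrix v : CStarMatrix (Fin p) (Fin p) A)‖ *
      ‖(CStarMatrix.ofMatrix w : CStarMatrix (Fin q) (Fin q) B)‖ *
      Real.sqrt (∑ i, ‖β i‖ ^ 2) := by
  by_cases hne : Nonempty (Fin p × Fin q)
  swap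
  · rw [not_nonempty_iff] at hne
    simp
  obtain ⟨I0⟩ := hne
  let F : CStarMatrix (Fin p) (Fin p) A →⋆ₙₐ[ℂ] CStarMatrix (Fin p × Fin q) (Fin p × Fin q) D :=
    { toFun := fun v => CStarMatrix.ofMatrix (Matrix.of fun I J =>
        if I.2 = J.2 then f (v I.1 J.1) else 0)
      map_smul' := fun c v => by
        ext I J
        simp
      map_zero' := by ext I J; simp
      map_add' := fun v w => by
        ext I J
        simp only [CStarMatrix.add_apply, CStarMatrix.ofMatrix_apply, Matrix.of_apply, map_add]
        split_ifs <;> simp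
      map_mul' := fun v w => by
        ext I J
        rw [CStarMatrix.mul_apply, Fintype.sum_prod_type]
        simp only [CStarMatrix.ofMatrix_apply, Matrix.of_apply, CStarMatrix.mul_apply]
        by_cases h : I.2 = J.2
        · simp [h, map_sum]
        · simp [h]
      map_star' := fun v => by
        ext I J
        simp only [CStarMatrix.star_apply, CStarMatrix.ofMatrix_apply, Matrix.of_apply]
        by_cases h : I.2 = J.2
        · simp [h, map_star]
        · simp [h, Ne.symm h] }
  let G : CStarMatrix (Fin q) (Fin q) B →⋆ₙₐ[ℂ] CStarMatrix (Fin p × Fin q) (Fin p × Fin q) D :=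
    { toFun := fun v => CStarMatrix.ofMatrix (Matrix.of fun I J =>
        if I.1 = J.1 then g (v I.2 J.2) else 0)
      map_smul' := fun c v => by
        ext I J
        simp
      map_zero' := by ext I J; simp
      map_add' := fun v w => by
        ext I J
        simp only [CStarMatrix.add_apply, CStarMatrix.ofMatrix_apply, Matrix.of_apply, map_add]
        split_ifs <;> simp
      map_mul' := fun v w => by
        ext I J
        rw [CStarMatrix.mul_apply, Fintype.sum_prod_type_right]
        simp only [CStarMatrix.ofMatrix_apply, Matrix.of_apply, CStarMatrix.mul_apply]
        by_cases h : I.1 = J.1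
        · simp [h, map_sum]
        · simp [h]
      map_star' := fun v => by
        ext I J
        simp only [CStarMatrix.star_apply, CStarMatrix.ofMatrix_apply, Matrix.of_apply]
        by_cases h : I.1 = J.1
        · simp [h, map_star]
        · simp [h, Ne.symm h] }
  set V : CStarMatrix (Fin p) (Fin p) A := CStarMatrix.ofMatrix v
  set W : CStarMatrix (Fin q) (Fin q) B := CStarMatrix.ofMatrix w
  have hFG : ∀ I J, (F V * G W) I J = f (v I.1 J.1) * g (w I.2 J.2) := by
    intro I J
    rw [CStarMatrix.mul_apply, Fintype.sum_prod_type]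
    change ∑ x, ∑ y, (if I.2 = y then f (v I.1 x) else 0) * (if x = J.1 then g (w y J.2) else 0) = _
    simp
  let a : CStarMatrix (Fin p × Fin q) (Fin p × Fin q) D :=
    CStarMatrix.ofMatrix (Matrix.of fun I J => if I = I0 then α J • (1 : D) else 0)
  let b : CStarMatrix (Fin p × Fin q) (Fin p × Fin q) D :=
    CStarMatrix.ofMatrix (Matrix.of fun I J => if I = I0 then star (β J) • (1 : D) else 0)
  have ha : ‖a‖ ≤ Real.sqrt (∑ i, ‖α i‖ ^ 2) := row_norm_le I0 α
  have hb : ‖star b‖ ≤ Real.sqrt (∑ i, ‖β i‖ ^ 2) := by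
    rw [norm_star]
    refine (row_norm_le I0 _).trans (le_of_eq ?_)
    simp
  have hent : ∑ I : Fin p × Fin q, ∑ J : Fin p × Fin q,
      (α I * β J) • (f (v I.1 J.1) * g (w I.2 J.2)) = (a * (F V * G W) * star b) I0 I0 := by
    rw [CStarMatrix.mul_apply]
    simp_rw [CStarMatrix.mul_apply (M := a), hFG]
    simp only [a, b, CStarMatrix.star_apply, CStarMatrix.ofMatrix_apply, Matrix.of_apply, if_true]
    rw [Finset.sum_comm]
    refine Finset.sum_congr rfl fun J _ => ?_
    rw [Finset.sum_mul]
    refine Finset.sum_congr rfl fun I _ => ?_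
    rw [star_smul, star_star, star_one, smul_mul_assoc, one_mul, smul_mul_smul_comm, mul_one]
  rw [hent]
  refine CStarMatrix.norm_entry_le_norm.trans ?_
  refine (norm_mul_le _ _).trans ?_
  gcongr
  refine (norm_mul_le _ _).trans ?_
  rw [mul_assoc]
  gcongr
  refine (norm_mul_le _ _).trans ?_
  gcongr
  · exact NonUnitalStarAlgHom.norm_apply_le F V
  · exact NonUnitalStarAlgHom.norm_apply_le G W

end PartSeven

section PartEight

variable {A B : Type u} [NonUnitalCStarAlgebra A] [PartialOrder A] [StarOrderedRing A]
  [NonUnitalCStarAlgebra B] [PartialOrder B] [StarOrderedRing B]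

lemma osProj_set_nonempty
    (NA : ∀ p : ℕ, Matrix (Fin p) (Fin p) A → ℝ)
    (NB : ∀ q : ℕ, Matrix (Fin q) (Fin q) B → ℝ) (u : A ⊗[ℂ] B) :
    { r : ℝ | ∃ (p q : ℕ) (α : Fin p × Fin q → ℂ) (v : Matrix (Fin p) (Fin p) A)
      (w : Matrix (Fin q) (Fin q) B) (β : Fin p × Fin q → ℂ),
      u = ∑ ik : Fin p × Fin q, ∑ jl : Fin p × Fin q,
            (α ik * β jl) • (v ik.1 jl.1 ⊗ₜ[ℂ] w ik.2 jl.2) ∧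
      r = Real.sqrt (∑ ik, ‖α ik‖ ^ 2) * NA p v * NB q w *
            Real.sqrt (∑ jl, ‖β jl‖ ^ 2) }.Nonempty := by
  obtain ⟨n, a, b, h⟩ := TensorProduct.exists_sum_tmul_eq u
  refine ⟨_, n, n, fun I => if I.1 = I.2 then 1 else 0, Matrix.diagonal a, Matrix.diagonal b,
    fun I => if I.1 = I.2 then 1 else 0, ?_, rfl⟩
  rw [h]
  simp only [Fintype.sum_prod_type]
  refine Finset.sum_congr rfl fun i _ => ?_
  simp only [ite_mul, one_mul, zero_mul, ite_smul, one_smul, zero_smul]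
  rw [Finset.sum_eq_single i (by
      intro b _ hb
      refine Finset.sum_eq_zero fun x _ => Finset.sum_eq_zero fun y _ => ?_
      rw [if_neg (Ne.symm hb)]) (by simp)]
  rw [Finset.sum_eq_single i (by
      intro j _ hb
      refine Finset.sum_eq_zero fun y _ => ?_
      simp [Matrix.diagonal_apply, Ne.symm hb]) (by simp)]
  rw [Finset.sum_eq_single i (by
      intro j _ hb
      simp [Ne.symm hb]) (by simp)]
  simp

lemma osProj_le {NA : ∀ p : ℕ, Matrix (Fin p) (Fin p) A → ℝ}
    {NB : ∀ q : ℕ, Matrix (Fin q) (Fin q) B → ℝ}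
    (hNA : ∀ p, IsCStarNorm (NA p)) (hNB : ∀ q, IsCStarNorm (NB q))
    (p q : ℕ) (α : Fin p × Fin q → ℂ) (v : Matrix (Fin p) (Fin p) A)
      (w : Matrix (Fin q) (Fin q) B) (β : Fin p × Fin q → ℂ) :
    osProjNorm NA NB (∑ ik : Fin p × Fin q, ∑ jl : Fin p × Fin q,
            (α ik * β jl) • (v ik.1 jl.1 ⊗ₜ[ℂ] w ik.2 jl.2)) ≤
      Real.sqrt (∑ ik, ‖α ik‖ ^ 2) * NA p v * NB q w *
            Real.sqrt (∑ jl, ‖β jl‖ ^ 2) := by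
  refine csInf_le ⟨0, ?_⟩ ⟨p, q, α, v, w, β, rfl, rfl⟩
  rintro r ⟨p, q, α, v, w, β, -, rfl⟩
  have h1 : 0 ≤ NA p v := (hNA p).nonneg' v
  have h2 : 0 ≤ NB q w := (hNB q).nonneg' w
  positivity

lemma bound_of_osProj {NA : ∀ p : ℕ, Matrix (Fin p) (Fin p) A → ℝ}
    {NB : ∀ q : ℕ, Matrix (Fin q) (Fin q) B → ℝ}
    {Z : Type*} [NormedAddCommGroup Z] [NormedSpace ℂ Z] (g : A ⊗[ℂ] B →ₗ[ℂ] Z)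
    (C : ℝ) (hC : 0 ≤ C)
    (h : ∀ (p q : ℕ) (α : Fin p × Fin q → ℂ) (v : Matrix (Fin p) (Fin p) A)
      (w : Matrix (Fin q) (Fin q) B) (β : Fin p × Fin q → ℂ),
      ‖∑ ik : Fin p × Fin q, ∑ jl : Fin p × Fin q,
            (α ik * β jl) • g (v ik.1 jl.1 ⊗ₜ[ℂ] w ik.2 jl.2)‖ ≤
      C * (Real.sqrt (∑ ik, ‖α ik‖ ^ 2) * NA p v * NB q w *
            Real.sqrt (∑ jl, ‖β jl‖ ^ 2))) (u : A ⊗[ℂ] B) :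
    ‖g u‖ ≤ C * osProjNorm NA NB u := by
  have key : ∀ r ∈ { r : ℝ | ∃ (p q : ℕ) (α : Fin p × Fin q → ℂ) (v : Matrix (Fin p) (Fin p) A)
      (w : Matrix (Fin q) (Fin q) B) (β : Fin p × Fin q → ℂ),
      u = ∑ ik : Fin p × Fin q, ∑ jl : Fin p × Fin q,
            (α ik * β jl) • (v ik.1 jl.1 ⊗ₜ[ℂ] w ik.2 jl.2) ∧
      r = Real.sqrt (∑ ik, ‖α ik‖ ^ 2) * NA p v * NB q w *
            Real.sqrt (∑ jl, ‖β jl‖ ^ 2) }, ‖g u‖ ≤ C * r := by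
    rintro r ⟨p, q, α, v, w, β, hu, rfl⟩
    refine le_trans (le_of_eq ?_) (h p q α v w β)
    rw [hu]
    simp only [map_sum, map_smul]
  obtain ⟨r0, hr0⟩ := osProj_set_nonempty NA NB u
  rcases hC.eq_or_lt with h0 | h0
  · have := key r0 hr0
    rw [← h0] at this ⊢
    simpa using this
  · rw [← div_le_iff₀' h0]
    refine le_csInf ⟨r0, hr0⟩ fun r hr => ?_
    rw [div_le_iff₀' h0]
    exact key r hr

lemma norm_diag_le (p : ℕ) {NA : Matrix (Fin p) (Fin p) A → ℝ} (hNA : IsCStarNorm NA) (a : A) :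
    NA (Matrix.diagonal fun _ => a) ≤ ‖a‖ := by
  rw [matrix_norm_eq hNA]
  let F : A →⋆ₙₐ[ℂ] CStarMatrix (Fin p) (Fin p) A :=
    { toFun := fun a => CStarMatrix.ofMatrix (Matrix.diagonal fun _ => a)
      map_smul' := fun c v => by
        ext I J
        simp [Matrix.diagonal_apply]
      map_zero' := by ext I J; simp [Matrix.diagonal_apply]
      map_add' := fun v w => by
        ext I J
        simp only [CStarMatrix.add_apply, CStarMatrix.ofMatrix_apply, Matrix.diagonal_apply]
        split_ifs <;> simp
      map_mul' := fun v w => by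
        ext I J
        rw [CStarMatrix.mul_apply]
        simp only [CStarMatrix.ofMatrix_apply, Matrix.diagonal_apply]
        by_cases h : I = J
        · simp [h]
        · simp [h]
      map_star' := fun v => by
        ext I J
        simp only [CStarMatrix.star_apply, CStarMatrix.ofMatrix_apply, Matrix.diagonal_apply]
        by_cases h : I = J
        · simp [h]
        · simp [h, Ne.symm h] }
  exact NonUnitalStarAlgHom.norm_apply_le F a

variable {X : Type u} [NonUnitalNormedRing X] [StarRing X] [NormedSpace ℂ X] [CompleteSpace X]
  {NA : ∀ p : ℕ, Matrix (Fin p) (Fin p) A → ℝ}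
  {NB : ∀ q : ℕ, Matrix (Fin q) (Fin q) B → ℝ}

lemma norm_tmul_le (hNA : ∀ p, IsCStarNorm (NA p)) (hNB : ∀ q, IsCStarNorm (NB q))
    (ι : A ⊗[ℂ] B →ₗ[ℂ] X) (hX : IsTensorCompletion (osProjNorm NA NB) X ι) (a : A) (b : B) :
    ‖ι (a ⊗ₜ b)‖ ≤ ‖a‖ * ‖b‖ := by
  rw [hX.norm_eq]
  have := osProj_le hNA hNB 1 1 (fun _ => 1) (Matrix.diagonal fun _ => a)
    (Matrix.diagonal fun _ => b) (fun _ => 1)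
  simp only [Fintype.sum_prod_type] at this
  simp at this
  refine this.trans ?_
  have h1 := norm_diag_le 1 (hNA 1) a
  have h2 := norm_diag_le 1 (hNB 1) b
  have h3 := (hNA 1).nonneg' (Matrix.diagonal fun _ => a)
  have h4 := (hNB 1).nonneg' (Matrix.diagonal fun _ => b)
  gcongr

lemma exists_multiplier_left (hNA : ∀ p, IsCStarNorm (NA p)) (hNB : ∀ q, IsCStarNorm (NB q))
    (ι : A ⊗[ℂ] B →ₗ[ℂ] X) (hX : IsTensorCompletion (osProjNorm NA NB) X ι) (a : A) :
    ∃ L : X →L[ℂ] X, (∀ c d, L (ι (c ⊗ₜ d)) = ι ((a * c) ⊗ₜ d)) ∧ ‖L‖ ≤ ‖a‖ := by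
  let g : A ⊗[ℂ] B →ₗ[ℂ] X := ι ∘ₗ (LinearMap.rTensor B (LinearMap.mulLeft ℂ a))
  have hg : ∀ u, ‖g u‖ ≤ ‖a‖ * ‖ι u‖ := by
    intro u
    rw [hX.norm_eq]
    refine bound_of_osProj g _ (norm_nonneg a) (fun p q α v w β => ?_) u
    have : ∑ ik : Fin p × Fin q, ∑ jl : Fin p × Fin q,
            (α ik * β jl) • g (v ik.1 jl.1 ⊗ₜ[ℂ] w ik.2 jl.2) =
        ι (∑ ik : Fin p × Fin q, ∑ jl : Fin p × Fin q,
            (α ik * β jl) • (((Matrix.diagonal fun _ => a) * v : Matrix (Fin p) (Fin p) A) ik.1 jl.1 ⊗ₜ[ℂ] w ik.2 jl.2)) := by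
      simp only [map_sum, map_smul]
      simp [g]
    rw [this, hX.norm_eq]
    refine (osProj_le hNA hNB _ _ _ _ _ _).trans ?_
    have h1 := (hNA p).mul_le (Matrix.diagonal fun _ => a) v
    have h2 := norm_diag_le p (hNA p) a
    have h3 := (hNA p).nonneg' v
    have h4 := (hNB q).nonneg' w
    calc _ ≤ Real.sqrt (∑ ik, ‖α ik‖ ^ 2) * (‖a‖ * NA p v) * NB q w *
            Real.sqrt (∑ jl, ‖β jl‖ ^ 2) := by
          gcongr
          exact h1.trans (by gcongr)
      _ = _ := by ring
  refine ⟨g.extendOfNorm ι, fun c d => ?_, ?_⟩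
  · rw [LinearMap.extendOfNorm_eq hX.dense ⟨_, hg⟩]
    simp [g]
  · exact LinearMap.opNorm_extendOfNorm_le hX.dense (norm_nonneg a) hg

lemma exists_multiplier_right (hNA : ∀ p, IsCStarNorm (NA p)) (hNB : ∀ q, IsCStarNorm (NB q))
    (ι : A ⊗[ℂ] B →ₗ[ℂ] X) (hX : IsTensorCompletion (osProjNorm NA NB) X ι) (b : B) :
    ∃ L : X →L[ℂ] X, (∀ c d, L (ι (c ⊗ₜ d)) = ι (c ⊗ₜ (b * d))) ∧ ‖L‖ ≤ ‖b‖ := by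
  let g : A ⊗[ℂ] B →ₗ[ℂ] X := ι ∘ₗ (LinearMap.lTensor A (LinearMap.mulLeft ℂ b))
  have hg : ∀ u, ‖g u‖ ≤ ‖b‖ * ‖ι u‖ := by
    intro u
    rw [hX.norm_eq]
    refine bound_of_osProj g _ (norm_nonneg b) (fun p q α v w β => ?_) u
    have : ∑ ik : Fin p × Fin q, ∑ jl : Fin p × Fin q,
            (α ik * β jl) • g (v ik.1 jl.1 ⊗ₜ[ℂ] w ik.2 jl.2) =
        ι (∑ ik : Fin p × Fin q, ∑ jl : Fin p × Fin q,
            (α ik * β jl) • (v ik.1 jl.1 ⊗ₜ[ℂ] ((Matrix.diagonal fun _ => b) * w : Matrix (Fin q) (Fin q) B) ik.2 jl.2)) := by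
      simp only [map_sum, map_smul]
      simp [g]
    rw [this, hX.norm_eq]
    refine (osProj_le hNA hNB _ _ _ _ _ _).trans ?_
    have h1 := (hNB q).mul_le (Matrix.diagonal fun _ => b) w
    have h2 := norm_diag_le q (hNB q) b
    have h3 := (hNA p).nonneg' v
    have h4 := (hNB q).nonneg' w
    calc _ ≤ Real.sqrt (∑ ik, ‖α ik‖ ^ 2) * NA p v * (‖b‖ * NB q w) *
            Real.sqrt (∑ jl, ‖β jl‖ ^ 2) := by
          gcongr
          exact h1.trans (by gcongr)
      _ = _ := by ring
  refine ⟨g.extendOfNorm ι, fun c d => ?_, ?_⟩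
  · rw [LinearMap.extendOfNorm_eq hX.dense ⟨_, hg⟩]
    simp [g]
  · exact LinearMap.opNorm_extendOfNorm_le hX.dense (norm_nonneg b) hg

lemma exists_slice (hNA : ∀ p, IsCStarNorm (NA p)) (hNB : ∀ q, IsCStarNorm (NB q))
    (ι : A ⊗[ℂ] B →ₗ[ℂ] X) (hX : IsTensorCompletion (osProjNorm NA NB) X ι) {k : ℕ}
    (ρ : A →⋆ₙₐ[ℂ] CStarMatrix (Fin k) (Fin k) ℂ) (r s : Fin k) :
    ∃ Θ : X →L[ℂ] B, ∀ c d, Θ (ι (c ⊗ₜ d)) = ρ c r s • d := by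
  let φ : A →ₗ[ℂ] ℂ :=
    { toFun := fun c => ρ c r s
      map_add' := fun x y => by simp
      map_smul' := fun c x => by simp }
  let g : A ⊗[ℂ] B →ₗ[ℂ] B := TensorProduct.lift ((LinearMap.lsmul ℂ B).comp φ)
  have hgt : ∀ c d, g (c ⊗ₜ d) = ρ c r s • d := fun c d => rfl
  have hg : ∀ u, ‖g u‖ ≤ 1 * ‖ι u‖ := by
    intro u
    rw [hX.norm_eq]
    refine bound_of_osProj g _ zero_le_one (fun p q α v w β => ?_) u
    rw [one_mul, matrix_norm_eq (hNA p), matrix_norm_eq (hNB q)]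
    letI : PartialOrder (Unitization ℂ B) := CStarAlgebra.spectralOrder _
    haveI : StarOrderedRing (Unitization ℂ B) := CStarAlgebra.spectralOrderedRing _
    letI : PartialOrder (CStarMatrix (Fin k) (Fin k) (Unitization ℂ B)) :=
      CStarAlgebra.spectralOrder _
    haveI : StarOrderedRing (CStarMatrix (Fin k) (Fin k) (Unitization ℂ B)) :=
      CStarAlgebra.spectralOrderedRing _
    let f1 : A →⋆ₙₐ[ℂ] CStarMatrix (Fin k) (Fin k) (Unitization ℂ B) :=
      { toFun := fun a => CStarMatrix.ofMatrix (Matrix.of fun i j =>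
          ρ a i j • (1 : Unitization ℂ B))
        map_smul' := fun c v => by
          ext1 I J
          simp [mul_smul]
        map_zero' := by ext1 I J; simp
        map_add' := fun v w => by
          ext1 I J
          simp [add_smul]
        map_mul' := fun v w => by
          ext1 I J
          rw [CStarMatrix.mul_apply]
          simp [CStarMatrix.mul_apply, Finset.sum_smul, smul_smul]
          exact Finset.sum_congr rfl fun _ _ => by rw [mul_comm]
        map_star' := fun v => by
          ext1 I J
          simp [CStarMatrix.star_apply, map_star] }
    let g1 : B →⋆ₙₐ[ℂ] CStarMatrix (Fin k) (Fin k) (Unitization ℂ B) :=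
      { toFun := fun b => CStarMatrix.ofMatrix (Matrix.diagonal fun _ => (b : Unitization ℂ B))
        map_smul' := fun c v => by
          ext1 I J
          by_cases h : I = J <;> simp [h, Matrix.diagonal_apply]
        map_zero' := by ext1 I J; simp [Matrix.diagonal_apply]
        map_add' := fun v w => by
          ext1 I J
          by_cases h : I = J <;> simp [h, Matrix.diagonal_apply]
        map_mul' := fun v w => by
          ext1 I J
          rw [CStarMatrix.mul_apply]
          by_cases h : I = J <;> simp [h, Matrix.diagonal_apply]
        map_star' := fun v => by
          ext1 I J
          by_cases h : I = J <;> simp [h, Matrix.diagonal_apply, CStarMatrix.star_apply, Ne.symm] }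
    refine le_trans ?_ (slice_bound f1 g1 p q α β v w)
    refine le_trans (le_of_eq ?_) (CStarMatrix.norm_entry_le_norm (i := r) (j := s))
    rw [← Unitization.norm_inr (𝕜 := ℂ)]
    congr 1
    have hsum : ∀ (S : Finset (Fin p × Fin q)) (F : Fin p × Fin q → CStarMatrix (Fin k) (Fin k) (Unitization ℂ B)),
        (∑ i ∈ S, F i) r s = ∑ i ∈ S, F i r s := by
      intro S F
      exact Matrix.sum_apply r s S F
    have hinr : ∀ (S : Finset (Fin p × Fin q)) (F : Fin p × Fin q → B),
        ((∑ i ∈ S, F i : B) : Unitization ℂ B) = ∑ i ∈ S, (F i : Unitization ℂ B) := by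
      intro S F
      exact map_sum (Unitization.inrHom ℂ ℂ B) F S
    rw [hsum, hinr]
    refine Finset.sum_congr rfl fun I _ => ?_
    rw [hsum, hinr]
    refine Finset.sum_congr rfl fun J _ => ?_
    rw [CStarMatrix.smul_apply, Unitization.inr_smul, hgt, Unitization.inr_smul, CStarMatrix.mul_apply]
    congr 1
    change _ = ∑ j, (ρ (v I.1 J.1) r j • (1 : Unitization ℂ B)) * 
      (Matrix.diagonal (fun _ => ((w I.2 J.2 : B) : Unitization ℂ B)) j s)
    simp [Matrix.diagonal_apply]
  exact ⟨g.extendOfNorm ι, fun c d => by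
    rw [LinearMap.extendOfNorm_eq hX.dense ⟨_, hg⟩, hgt]⟩

end PartEight

section PartNine

lemma norm_le_of_mem_quasispectrum' {X : Type*} [NonUnitalNormedRing X] [NormedSpace ℂ X]
    [CompleteSpace X] [IsScalarTower ℂ X X] [SMulCommClass ℂ X X] (z : X) (μ : ℂ)
    (h : μ ∈ quasispectrum ℂ z) :
    ‖μ‖ ≤ ‖z‖ * ‖(1 : WithLp 1 (Unitization ℂ X))‖ := by
  rw [Unitization.quasispectrum_eq_spectrum_inr' ℂ ℂ,
    ← AlgEquiv.spectrum_eq (WithLp.unitizationAlgEquiv ℂ).symm (z : Unitization ℂ X)] at h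
  refine (spectrum.norm_le_norm_mul_of_mem h).trans (le_of_eq ?_)
  congr 1
  exact WithLp.unitization_norm_inr z

lemma star_compat {X C : Type*} [NonUnitalNormedRing X] [StarRing X] [NormedSpace ℂ X]
    [CompleteSpace X] [IsScalarTower ℂ X X] [SMulCommClass ℂ X X] [NonUnitalCStarAlgebra C]
    (Θ : X →ₙₐ[ℂ] C) (hΘ : Continuous Θ) (s : C →ₗ[ℂ] X) (hs : Continuous s)
    (hΘs : ∀ c, Θ (s c) = c) (D : Set X) (hD : Dense D) (hsD : ∀ c, s c ∈ D)
    (hst : ∀ x ∈ D, Θ (star x) = star (Θ x)) (x : X) : Θ (star x) = star (Θ x) := by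
  have hann : ∀ d : C, (∀ c, d * c = 0) → d = 0 := fun d hd => by
    rw [← CStarRing.mul_star_self_eq_zero_iff, hd]
  let Ψ0 : X → C := fun x => star (Θ (star x))
  have Ψmul : ∀ x y, Ψ0 (x * y) = Ψ0 x * Ψ0 y := fun x y => by simp [Ψ0]
  have ΨD : ∀ x ∈ D, Ψ0 x = Θ x := fun x hx => by simp [Ψ0, hst x hx]
  have Ψs : ∀ c, Ψ0 (s c) = c := fun c => by rw [ΨD _ (hsD c), hΘs]
  have Ψsmul : ∀ (l : ℂ) x, Ψ0 (l • x) = l • Ψ0 x := by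
    intro l x
    rw [← sub_eq_zero]
    refine hann _ fun c => ?_
    have : Ψ0 (l • x) * Ψ0 (s c) = Ψ0 x * Ψ0 (s (l • c)) := by
      rw [← Ψmul, ← Ψmul, map_smul, smul_mul_assoc, mul_smul_comm]
    rw [Ψs, Ψs] at this
    rw [sub_mul, this, smul_mul_assoc, mul_smul_comm, sub_self]
  let Ψ : X →ₙₐ[ℂ] C :=
    { toFun := Ψ0
      map_smul' := Ψsmul
      map_zero' := by simp [Ψ0]
      map_add' := fun x y => by simp [Ψ0]
      map_mul' := Ψmul }
  have ΨD' : ∀ x ∈ D, Ψ x = Θ x := ΨD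
  have Ψs' : ∀ c, Ψ (s c) = c := Ψs
  suffices hh : Ψ x = Θ x by
    have h2 : star (Θ (star x)) = Θ x := hh
    rw [← h2, star_star]
  set y := Ψ x - Θ x with hy
  suffices hy0 : y = 0 from sub_eq_zero.mp hy0
  -- `s y` is in the closure of the kernel
  have h1 : s y ∈ closure {z | Ψ z = 0} := by
    obtain ⟨xs, hxs, hlim⟩ := mem_closure_iff_seq_limit.mp (hD x)
    have hl : Filter.Tendsto (fun n => s (Ψ (x - xs n)) - (x - xs n)) Filter.atTop (nhds (s y)) := by
      have e1 : Filter.Tendsto (fun n => Ψ (x - xs n)) Filter.atTop (nhds y) := by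
        have : (fun n => Ψ (x - xs n)) = fun n => Ψ x - Θ (xs n) := by
          funext n
          rw [map_sub, ΨD' _ (hxs n)]
        rw [this]
        exact tendsto_const_nhds.sub ((hΘ.tendsto x).comp hlim)
      have e2 : Filter.Tendsto (fun n => x - xs n) Filter.atTop (nhds 0) := by
        simpa using (tendsto_const_nhds (x := x)).sub hlim
      simpa using ((hs.tendsto y).comp e1).sub e2
    refine mem_closure_of_tendsto hl (Filter.Eventually.of_forall fun n => ?_)
    change Ψ _ = 0
    rw [map_sub, Ψs', sub_self]
  have h2 : s (star y) * s y ∈ closure {z | Ψ z = 0} := by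
    have hc : Continuous fun z : X => s (star y) * z := continuous_const.mul continuous_id
    refine map_mem_closure hc h1 fun z hz => ?_
    change Ψ _ = 0
    rw [map_mul, show Ψ z = 0 from hz, mul_zero]
  rw [← CStarRing.star_mul_self_eq_zero_iff]
  refine CFC.eq_zero_of_quasispectrum_eq_zero (R := ℂ) (star y * y) ?_ (IsSelfAdjoint.star_mul_self y).isStarNormal
  intro μ hμ
  rw [Set.mem_singleton_iff, ← norm_le_zero_iff]
  set K := ‖(1 : WithLp 1 (Unitization ℂ X))‖
  refine le_of_forall_pos_le_add fun ε hε => ?_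
  have hK : 0 ≤ K := norm_nonneg _
  obtain ⟨z, hz, hzd⟩ := Metric.mem_closure_iff.mp h2 (ε / (K + 1)) (by positivity)
  have e : Ψ (s (star y) * s y - z) = star y * y := by
    rw [map_sub, map_mul, Ψs', Ψs', show Ψ z = 0 from hz, sub_zero]
  rw [← e] at hμ
  have := norm_le_of_mem_quasispectrum' _ _ (NonUnitalAlgHom.quasispectrum_apply_subset Ψ _ hμ)
  rw [dist_eq_norm] at hzd
  rw [zero_add]
  refine this.trans ?_
  have h3 : ‖s (star y) * s y - z‖ * K ≤ (ε / (K + 1)) * (K + 1) := by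
    gcongr
    linarith
  rwa [div_mul_cancel₀ _ (by positivity)] at h3

end PartNine

section PartTen

lemma exists_left_ideal {X : Type*} [NonUnitalNormedRing X] [NormedSpace ℂ X]
    [CompleteSpace X] [IsScalarTower ℂ X X] [SMulCommClass ℂ X X] (b : X)
    (hb : ∀ y : X, ¬ (y + b + y * b = 0)) :
    ∃ L : Submodule ℂ X, IsClosed (L : Set X) ∧ (∀ x ∈ L, ∀ y : X, y * x ∈ L) ∧
      (∀ x ∉ L, ∀ z : X, ∃ y : X, y * x - z ∈ L) ∧ b ∉ L ∧ b * b + b ∈ L := by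
  let Y := WithLp 1 (Unitization ℂ X)
  let j : X → Y := fun x => WithLp.toLp 1 (x : Unitization ℂ X)
  have jmul : ∀ x y, j (x * y) = j x * j y := fun x y => by
    apply WithLp.ofLp_injective
    rw [WithLp.unitization_mul]
    exact Unitization.inr_mul ℂ x y
  have jadd : ∀ x y, j (x + y) = j x + j y := fun x y => by
    apply WithLp.ofLp_injective
    exact Unitization.inr_add ℂ x y
  have jsub : ∀ x y, j (x - y) = j x - j y := fun x y => by
    apply WithLp.ofLp_injective
    exact Unitization.inr_sub ℂ x y
  have jsmul : ∀ (c : ℂ) x, j (c • x) = algebraMap ℂ Y c * j x := fun c x => by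
    rw [← Algebra.smul_def]
    apply WithLp.ofLp_injective
    exact Unitization.inr_smul ℂ c x
  have jzero : j 0 = 0 := by
    apply WithLp.ofLp_injective
    exact Unitization.inr_zero ℂ
  have jideal : ∀ z (y : Y), ∃ w, j w = j z * y := fun z y => by
    refine ⟨y.ofLp.fst • z + z * y.ofLp.snd, ?_⟩
    apply WithLp.ofLp_injective
    rw [WithLp.unitization_mul]
    change ((_ : X) : Unitization ℂ X) = (z : Unitization ℂ X) * y.ofLp
    ext
    · simp
    · simp
  have hne : Ideal.span {1 + j b} ≠ ⊤ := by
    intro h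
    rw [Ideal.eq_top_iff_one, Ideal.mem_span_singleton'] at h
    obtain ⟨y, hy⟩ := h
    have hy2 : y.ofLp * (1 + (b : Unitization ℂ X)) = 1 := by
      have := congrArg WithLp.ofLp hy
      rw [WithLp.unitization_mul] at this
      exact this
    have h1 := congrArg (fun t => t.fst) hy2
    have h2 := congrArg (fun t => t.snd) hy2
    simp at h1 h2
    rw [h1] at h2
    refine hb y.ofLp.snd ?_
    rw [← h2]
    simp
    abel
  obtain ⟨M, hM, hle⟩ := Ideal.exists_le_maximal _ hne
  have hbM : 1 + j b ∈ M := hle (Ideal.mem_span_singleton_self _)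
  have hcl : IsClosed (M : Set Y) := Ideal.IsMaximal.isClosed
  refine ⟨{ carrier := {x | j x ∈ M}, add_mem' := ?_, zero_mem' := ?_, smul_mem' := ?_ }, ?_, ?_,
    ?_, ?_, ?_⟩
  · intro x y hx hy
    change j _ ∈ M
    rw [jadd]
    exact M.add_mem hx hy
  · change j 0 ∈ M
    rw [jzero]; exact M.zero_mem
  · intro c x hx
    change j _ ∈ M
    rw [jsmul]
    exact M.mul_mem_left _ hx
  · exact hcl.preimage (WithLp.unitization_isometry_inr (𝕜 := ℂ) (A := X)).continuous
  · intro x hx y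
    change j _ ∈ M
    rw [jmul]
    exact M.mul_mem_left _ hx
  · intro x hx z
    have hx' : j x ∉ M := hx
    obtain ⟨y, hy⟩ : ∃ y : Y, y * j x - 1 ∈ M := by
      have ht : M ⊔ Ideal.span {j x} = ⊤ := by
        refine hM.out.2 _ ?_
        refine lt_of_le_of_ne le_sup_left fun h => hx' ?_
        rw [h]
        exact Ideal.mem_sup_right (Ideal.mem_span_singleton_self _)
      rw [Ideal.eq_top_iff_one, Submodule.mem_sup] at ht
      obtain ⟨m, hm, n, hn, hmn⟩ := ht
      rw [Ideal.mem_span_singleton'] at hn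
      obtain ⟨y, rfl⟩ := hn
      refine ⟨y, ?_⟩
      rw [← hmn]
      rw [sub_add_cancel_right]
      exact M.neg_mem hm
    obtain ⟨w, hw⟩ := jideal z y
    refine ⟨w, ?_⟩
    change j _ ∈ M
    rw [jsub, jmul, hw]
    have := M.mul_mem_left (j z) hy
    rwa [mul_sub, mul_one, ← mul_assoc] at this
  · intro h
    have h' : j b ∈ M := h
    have : (1 : Y) ∈ M := by simpa using M.sub_mem hbM h'
    exact hM.ne_top ((Ideal.eq_top_iff_one M).mpr this)
  · change j _ ∈ M
    have := M.mul_mem_left (j b) hbM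
    rw [mul_add, mul_one] at this
    rwa [jadd, jmul, add_comm]

end PartTen

section PartEleven

lemma exists_rep {X G : Type*} [NormedAddCommGroup X] [NormedSpace ℂ X]
    [NonUnitalNormedRing G] [NormedSpace ℂ G] (L : Submodule ℂ X) [hL : IsClosed (L : Set X)]
    (l : G → X →L[ℂ] X) (ladd : ∀ a c, l (a + c) = l a + l c)
    (lsmul : ∀ (r : ℂ) c, l (r • c) = r • l c) (lmul : ∀ a c, l (a * c) = l a * l c)
    (lnorm : ∀ a, ‖l a‖ ≤ ‖a‖) (linv : ∀ a, ∀ x ∈ L, l a x ∈ L) :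
    ∃ T : G →ₙₐ[ℂ] ((X ⧸ L) →L[ℂ] (X ⧸ L)), Continuous T ∧
      ∀ a x, T a (L.mkQ x) = L.mkQ (l a x) := by
  have hF : ∀ a, ∃ F : (X ⧸ L) →L[ℂ] (X ⧸ L), (∀ x, F (L.mkQ x) = L.mkQ (l a x)) ∧
      ‖F‖ ≤ ‖a‖ := by
    intro a
    have hb : ∀ e : X ⧸ L, ‖L.mapQ L (l a).toLinearMap (linv a) e‖ ≤ ‖a‖ * ‖e‖ := by
      intro e
      refine le_of_forall_pos_le_add fun ε hε => ?_
      obtain ⟨x, rfl, hx⟩ := Submodule.Quotient.norm_mk_lt e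
        (ε := ε / (‖a‖ + 1)) (by positivity)
      rw [Submodule.mapQ_apply]
      refine (Submodule.Quotient.norm_mk_le _ _).trans ?_
      have h1 : ‖l a x‖ ≤ ‖a‖ * ‖x‖ := ((l a).le_opNorm x).trans (by gcongr; exact lnorm a)
      refine h1.trans ?_
      calc ‖a‖ * ‖x‖ ≤ ‖a‖ * (‖(Submodule.Quotient.mk x : X ⧸ L)‖ + ε / (‖a‖ + 1)) := by gcongr
        _ = ‖a‖ * ‖(Submodule.Quotient.mk x : X ⧸ L)‖ + ‖a‖ * (ε / (‖a‖ + 1)) := by ring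
        _ ≤ ‖a‖ * ‖(Submodule.Quotient.mk x : X ⧸ L)‖ + (‖a‖ + 1) * (ε / (‖a‖ + 1)) := by
          gcongr; linarith
        _ = _ := by rw [mul_div_cancel₀]; positivity
    refine ⟨LinearMap.mkContinuous _ ‖a‖ hb, fun x => ?_, ?_⟩
    · rfl
    · exact LinearMap.mkContinuous_norm_le _ (norm_nonneg a) _
  choose T0 hT0 hTn using hF
  have ext : ∀ F F' : (X ⧸ L) →L[ℂ] (X ⧸ L), (∀ x, F (L.mkQ x) = F' (L.mkQ x)) → F = F' := by
    intro F F' h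
    ext1 e
    obtain ⟨x, rfl⟩ := L.mkQ_surjective e
    exact h x
  have tadd : ∀ a c, T0 (a + c) = T0 a + T0 c := fun a c => ext _ _ fun x => by
    rw [ContinuousLinearMap.add_apply, hT0, hT0, hT0, ladd, ContinuousLinearMap.add_apply, map_add]
  let T : G →ₙₐ[ℂ] ((X ⧸ L) →L[ℂ] (X ⧸ L)) :=
    { toFun := T0
      map_smul' := fun r a => ext _ _ fun x => by
        change T0 (r • a) _ = r • T0 a _
        rw [hT0, hT0, lsmul, ContinuousLinearMap.smul_apply, map_smul]
      map_zero' := by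
        have := tadd 0 0
        rw [add_zero] at this
        exact left_eq_add.mp this
      map_add' := tadd
      map_mul' := fun a c => ext _ _ fun x => by
        change _ = T0 a (T0 c _)
        rw [hT0, hT0, hT0, lmul]
        rfl }
  refine ⟨T, ?_, hT0⟩
  have := AddMonoidHomClass.continuous_of_bound T 1 (fun a => by
    rw [one_mul]; exact hTn a)
  exact this

lemma ext_of_tmul {A B X Z : Type u} [AddCommGroup A] [Module ℂ A] [AddCommGroup B] [Module ℂ B]
    [NormedAddCommGroup X] [NormedSpace ℂ X]
    [NormedAddCommGroup Z] [NormedSpace ℂ Z] (ι : A ⊗[ℂ] B →ₗ[ℂ] X) (hd : DenseRange ι)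
    (f g : X →L[ℂ] Z) (h : ∀ a b, f (ι (a ⊗ₜ b)) = g (ι (a ⊗ₜ b))) : f = g := by
  have h1 : f.toLinearMap ∘ₗ ι = g.toLinearMap ∘ₗ ι := TensorProduct.ext' h
  refine ContinuousLinearMap.coeFn_injective (hd.equalizer f.continuous g.continuous ?_)
  funext u
  exact LinearMap.congr_fun h1 u

variable {A B : Type u} [NonUnitalCStarAlgebra A] [PartialOrder A] [StarOrderedRing A]
  [NonUnitalCStarAlgebra B] [PartialOrder B] [StarOrderedRing B]
  {X : Type u} [NonUnitalNormedRing X] [StarRing X] [NormedSpace ℂ X] [CompleteSpace X]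
  [IsScalarTower ℂ X X] [SMulCommClass ℂ X X]
  {NA : ∀ p : ℕ, Matrix (Fin p) (Fin p) A → ℝ}
  {NB : ∀ q : ℕ, Matrix (Fin q) (Fin q) B → ℝ}

/-- The pair of commuting representations attached to an irreducible module. -/
lemma exists_module (hNA : ∀ p, IsCStarNorm (NA p)) (hNB : ∀ q, IsCStarNorm (NB q))
    (ι : A ⊗[ℂ] B →ₗ[ℂ] X) (hX : IsTensorCompletion (osProjNorm NA NB) X ι)
    (b : X) (hb : ∀ y : X, ¬ (y + b + y * b = 0)) :
    ∃ (E : Type u) (_ : NormedAddCommGroup E) (_ : NormedSpace ℂ E)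
      (T : A →ₙₐ[ℂ] (E →L[ℂ] E)) (S : B →ₙₐ[ℂ] (E →L[ℂ] E))
      (π : X →ₗ[ℂ] (E →L[ℂ] E)) (v : E),
      Continuous T ∧ Continuous S ∧ (∀ a d, T a * S d = S d * T a) ∧
      (∀ a d, π (ι (a ⊗ₜ d)) = T a * S d) ∧ (∀ e, Continuous fun x => π x e) ∧
      v ≠ 0 ∧ π b v = - v ∧
      (∀ w : E, w ≠ 0 → ∀ z : E, ∃ x : X, π x w = z) := by
  obtain ⟨L, hLc, hLi, hLirr, hbL, hbb⟩ := exists_left_ideal b hb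
  haveI : IsClosed (L : Set X) := hLc
  choose l hl hln using exists_multiplier_left hNA hNB ι hX
  choose m hm hmn using exists_multiplier_right hNA hNB ι hX
  have clos : ∀ y, (∀ c d, ι (c ⊗ₜ d) * y ∈ L) → y ∈ L := by
    intro y hy
    by_contra hyL
    have hall : ∀ z : X, z * y ∈ L := by
      intro z
      refine hX.dense.induction_on (p := fun z => z * y ∈ L) z
        (hLc.preimage (continuous_id.mul continuous_const)) fun u => ?_
      induction u with
      | zero => simp
      | tmul c d => exact hy c d
      | add u w hu hw => rw [map_add, add_mul]; exact L.add_mem hu hw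
    obtain ⟨z, hz⟩ := hLirr y hyL y
    have := L.sub_mem (hall z) hz
    rw [sub_sub_cancel] at this
    exact hyL this
  have linv : ∀ a, ∀ x ∈ L, l a x ∈ L := by
    intro a x hx
    refine clos _ fun c d => ?_
    have : (ContinuousLinearMap.mul ℂ X (ι (c ⊗ₜ d))).comp (l a) =
        ContinuousLinearMap.mul ℂ X (ι ((c * a) ⊗ₜ d)) := by
      refine ext_of_tmul ι hX.dense _ _ fun e f => ?_
      simp [hl, hX.mul_tmul, mul_assoc]
    have h2 := congrArg (fun F => F x) this
    simp at h2
    rw [h2]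
    exact hLi _ hx _
  have minv : ∀ a, ∀ x ∈ L, m a x ∈ L := by
    intro a x hx
    refine clos _ fun c d => ?_
    have : (ContinuousLinearMap.mul ℂ X (ι (c ⊗ₜ d))).comp (m a) =
        ContinuousLinearMap.mul ℂ X (ι (c ⊗ₜ (d * a))) := by
      refine ext_of_tmul ι hX.dense _ _ fun e f => ?_
      simp [hm, hX.mul_tmul, mul_assoc]
    have h2 := congrArg (fun F => F x) this
    simp at h2
    rw [h2]
    exact hLi _ hx _
  obtain ⟨T, hTc, hT⟩ := exists_rep L l
    (fun a c => ext_of_tmul ι hX.dense _ _ fun e f => by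
      simp [hl, add_mul, TensorProduct.add_tmul])
    (fun r c => ext_of_tmul ι hX.dense _ _ fun e f => by
      simp only [hl, smul_mul_assoc, ContinuousLinearMap.smul_apply]
      rw [← TensorProduct.smul_tmul', map_smul])
    (fun a c => ext_of_tmul ι hX.dense _ _ fun e f => by
      simp [hl, mul_assoc]) hln linv
  obtain ⟨S, hSc, hS⟩ := exists_rep L m
    (fun a c => ext_of_tmul ι hX.dense _ _ fun e f => by
      simp [hm, add_mul, TensorProduct.tmul_add])
    (fun r c => ext_of_tmul ι hX.dense _ _ fun e f => by
      simp [hm, smul_mul_assoc, TensorProduct.tmul_smul])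
    (fun a c => ext_of_tmul ι hX.dense _ _ fun e f => by
      simp [hm, mul_assoc]) hmn minv
  obtain ⟨π, hπc, hπ⟩ := exists_rep L (fun x : X => ContinuousLinearMap.mul ℂ X x)
    (fun a c => by simp) (fun r c => by simp)
    (fun a c => by ext x; simp [mul_assoc])
    (fun a => ContinuousLinearMap.opNorm_mul_apply_le ℂ X a)
    (fun a x hx => hLi x hx a)
  have ext : ∀ F F' : (X ⧸ L) →L[ℂ] (X ⧸ L), (∀ x, F (L.mkQ x) = F' (L.mkQ x)) → F = F' := by
    intro F F' h
    ext1 e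
    obtain ⟨x, rfl⟩ := L.mkQ_surjective e
    exact h x
  have hlm : ∀ a d, (l a).comp (m d) = (m d).comp (l a) := fun a d =>
    ext_of_tmul ι hX.dense _ _ fun e f => by simp [hl, hm]
  have hlm2 : ∀ a d, (l a).comp (m d) = ContinuousLinearMap.mul ℂ X (ι (a ⊗ₜ d)) := fun a d =>
    ext_of_tmul ι hX.dense _ _ fun e f => by simp [hl, hm, hX.mul_tmul]
  refine ⟨X ⧸ L, inferInstance, inferInstance, T, S, (π : X →ₗ[ℂ] _), L.mkQ b, hTc, hSc, ?_, ?_,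
    ?_, ?_, ?_, ?_⟩
  · intro a d
    refine ext _ _ fun x => ?_
    rw [ContinuousLinearMap.mul_apply, ContinuousLinearMap.mul_apply, hS, hT, hT, hS]
    congr 1
    exact congrArg (fun F => F x) (hlm a d)
  · intro a d
    refine ext _ _ fun x => ?_
    change π _ _ = _
    rw [ContinuousLinearMap.mul_apply, hS, hT, hπ]
    congr 1
    exact (congrArg (fun F => F x) (hlm2 a d)).symm
  · intro e
    exact hπc.clm_apply continuous_const
  · intro h
    rw [Submodule.mkQ_apply, Submodule.Quotient.mk_eq_zero] at h
    exact hbL h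
  · change π b _ = _
    rw [hπ, ← sub_eq_zero, sub_neg_eq_add, ← map_add, Submodule.mkQ_apply,
      Submodule.Quotient.mk_eq_zero]
    exact hbb
  · intro w hw z
    obtain ⟨x, rfl⟩ := L.mkQ_surjective w
    obtain ⟨z, rfl⟩ := L.mkQ_surjective z
    have hx : x ∉ L := by
      intro h
      apply hw
      rw [Submodule.mkQ_apply, Submodule.Quotient.mk_eq_zero]
      exact h
    obtain ⟨y, hy⟩ := hLirr x hx z
    refine ⟨y, ?_⟩
    change π y _ = _
    rw [hπ, ← sub_eq_zero, ← map_sub, Submodule.mkQ_apply, Submodule.Quotient.mk_eq_zero]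
    exact hy

end PartEleven

section PartTwelve

variable {A B : Type u} [NonUnitalCStarAlgebra A] [PartialOrder A] [StarOrderedRing A]
  [NonUnitalCStarAlgebra B] [PartialOrder B] [StarOrderedRing B]
  {X : Type u} [NonUnitalNormedRing X] [StarRing X] [NormedSpace ℂ X] [CompleteSpace X]
  [IsScalarTower ℂ X X] [SMulCommClass ℂ X X]
  {NA : ∀ p : ℕ, Matrix (Fin p) (Fin p) A → ℝ}
  {NB : ∀ q : ℕ, Matrix (Fin q) (Fin q) B → ℝ}

lemma exists_theta (hNA : ∀ p, IsCStarNorm (NA p)) (hNB : ∀ q, IsCStarNorm (NB q))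
    (ι : A ⊗[ℂ] B →ₗ[ℂ] X) (hX : IsTensorCompletion (osProjNorm NA NB) X ι) {k : ℕ}
    (ρ : A →⋆ₙₐ[ℂ] CStarMatrix (Fin k) (Fin k) ℂ) (a : Fin k → Fin k → A)
    (ha : ∀ i j l m, ρ (a l m) i j = if i = l ∧ j = m then 1 else 0) :
    ∃ Θ : X →ₙₐ[ℂ] CStarMatrix (Fin k) (Fin k) B,
      (∀ i j, Continuous fun x => Θ x i j) ∧
      (∀ c d i j, Θ (ι (c ⊗ₜ d)) i j = ρ c i j • d) ∧
      (∀ x, Θ (star x) = star (Θ x)) := by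
  choose Θ0 hΘ0 using exists_slice hNA hNB ι hX ρ
  have hmul : ∀ x y i j, Θ0 i j (x * y) = ∑ l, Θ0 i l x * Θ0 l j y := by
    intro x y i j
    have key : ∀ c d, (Θ0 i j).comp (ContinuousLinearMap.mul ℂ X (ι (c ⊗ₜ d))) =
        ∑ l, (ContinuousLinearMap.mul ℂ B (Θ0 i l (ι (c ⊗ₜ d)))).comp (Θ0 l j) := by
      intro c d
      refine ext_of_tmul ι hX.dense _ _ fun e f => ?_
      simp [ContinuousLinearMap.sum_apply, hX.mul_tmul, hΘ0, CStarMatrix.mul_apply,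
        Finset.sum_smul, smul_smul, smul_mul_smul_comm]
    have key2 : (Θ0 i j).comp ((ContinuousLinearMap.mul ℂ X).flip y) =
        ∑ l, ((ContinuousLinearMap.mul ℂ B).flip (Θ0 l j y)).comp (Θ0 i l) := by
      refine ext_of_tmul ι hX.dense _ _ fun c d => ?_
      have := congrArg (fun F => F y) (key c d)
      simpa [ContinuousLinearMap.sum_apply] using this
    have := congrArg (fun F => F x) key2
    simpa [ContinuousLinearMap.sum_apply] using this
  let Θ : X →ₙₐ[ℂ] CStarMatrix (Fin k) (Fin k) B :=
    { toFun := fun x => CStarMatrix.ofMatrix (Matrix.of fun i j => Θ0 i j x)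
      map_smul' := fun c x => by ext i j; simp
      map_zero' := by ext i j; simp
      map_add' := fun x y => by ext i j; simp
      map_mul' := fun x y => by
        ext i j
        rw [CStarMatrix.mul_apply]
        exact hmul x y i j }
  have hΘa : ∀ x i j, Θ x i j = Θ0 i j x := fun x i j => rfl
  have hΘt : ∀ c d i j, Θ (ι (c ⊗ₜ d)) i j = ρ c i j • d := fun c d i j => hΘ0 i j c d
  refine ⟨Θ, fun i j => (Θ0 i j).continuous, hΘt, ?_⟩
  -- the section
  let s : CStarMatrix (Fin k) (Fin k) B →ₗ[ℂ] X :=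
    { toFun := fun c => ∑ i, ∑ j, ι (a i j ⊗ₜ c i j)
      map_add' := fun c d => by
        simp [TensorProduct.tmul_add, Finset.sum_add_distrib]
      map_smul' := fun r c => by
        simp [TensorProduct.tmul_smul, Finset.smul_sum] }
  have hs : Continuous s := by
    refine AddMonoidHomClass.continuous_of_bound s (∑ i, ∑ j, ‖a i j‖) fun c => ?_
    change ‖∑ i, ∑ j, ι (a i j ⊗ₜ c i j)‖ ≤ _
    rw [Finset.sum_mul]
    refine norm_sum_le_of_le _ fun i _ => ?_
    rw [Finset.sum_mul]
    refine norm_sum_le_of_le _ fun j _ => ?_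
    refine (norm_tmul_le hNA hNB ι hX _ _).trans ?_
    gcongr
    exact CStarMatrix.norm_entry_le_norm
  have hΘs : ∀ c, Θ (s c) = c := by
    intro c
    ext i j
    rw [hΘa]
    change Θ0 i j (∑ l, ∑ m, ι (a l m ⊗ₜ c l m)) = _
    simp only [map_sum, hΘ0, ha]
    rw [Finset.sum_eq_single i (by
      intro l _ hl
      refine Finset.sum_eq_zero fun m _ => ?_
      simp [Ne.symm hl]) (by simp)]
    rw [Finset.sum_eq_single j (by
      intro l _ hl
      simp [Ne.symm hl]) (by simp)]
    simp
  have hΘc : Continuous Θ := by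
    have h1 : Continuous fun x => (Matrix.of fun i j => Θ0 i j x : Matrix (Fin k) (Fin k) B) :=
      continuous_pi fun i => continuous_pi fun j => (Θ0 i j).continuous
    exact (CStarMatrix.ofMatrixL (m := Fin k) (n := Fin k) (A := B)).continuous.comp h1
  refine star_compat Θ hΘc s hs hΘs (Set.range ι) hX.dense ?_ ?_
  · intro c
    exact ⟨∑ i, ∑ j, a i j ⊗ₜ c i j, by simp only [map_sum]; rfl⟩
  · rintro _ ⟨u, rfl⟩
    induction u with
    | zero => simp
    | tmul c d =>
      rw [hX.star_tmul]
      ext i j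
      rw [CStarMatrix.star_apply, hΘt, hΘt, map_star, CStarMatrix.star_apply, star_smul]
    | add u w hu hw => rw [map_add, star_add, map_add, hu, hw, map_add, star_add]

lemma exists_obstruction (hNA : ∀ p, IsCStarNorm (NA p)) (hNB : ∀ q, IsCStarNorm (NB q))
    (ι : A ⊗[ℂ] B →ₗ[ℂ] X) (hX : IsTensorCompletion (osProjNorm NA NB) X ι)
    (hA : IsSubhomogeneous A) (b : X) (hb : ∀ y : X, ¬ (y + b + y * b = 0)) :
    ∃ (k : ℕ) (Θ : X →ₙₐ[ℂ] CStarMatrix (Fin k) (Fin k) B),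
      (∀ x, Θ (star x) = star (Θ x)) ∧ ∀ c, ¬ (c + Θ b + c * Θ b = 0) := by
  obtain ⟨n, hn⟩ := hA
  obtain ⟨E, iE, nE, T, S, π, v, hTc, hSc, hTS, hπ, hπc, hv, hbv, hirr⟩ :=
    exists_module hNA hNB ι hX b hb
  have hne : ∃ a, T a ≠ 0 := by
    by_contra hcon
    push Not at hcon
    have : π b v = 0 := by
      refine hX.dense.induction_on (p := fun x => π x v = 0) b
        (isClosed_eq (hπc v) continuous_const) fun u => ?_
      induction u with
      | zero => simp
      | tmul c d => rw [hπ, hcon, zero_mul, ContinuousLinearMap.zero_apply]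
      | add u w hu hw => rw [map_add, map_add, ContinuousLinearMap.add_apply, hu, hw, add_zero]
    rw [hbv, neg_eq_zero] at this
    exact hv this
  have hcyc : ∀ p, T p ≠ 0 → ∀ r : E →L[ℂ] E, (∀ a, r * T a * T p = 0) → r = 0 := by
    intro p hp r hr
    obtain ⟨e, he⟩ : ∃ e, T p e ≠ 0 := by
      by_contra hcon
      push Not at hcon
      exact hp (ContinuousLinearMap.ext hcon)
    ext1 z
    obtain ⟨x, rfl⟩ := hirr _ he z
    rw [ContinuousLinearMap.zero_apply]
    refine hX.dense.induction_on (p := fun x => r (π x (T p e)) = 0) x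
        (isClosed_eq (r.continuous.comp (hπc _)) continuous_const) fun u => ?_
    induction u with
    | zero => simp
    | tmul c d =>
      have h1 : r * (T c * S d) * T p = 0 := by
        rw [mul_assoc, mul_assoc, ← hTS, ← mul_assoc, ← mul_assoc, hr, zero_mul]
      rw [hπ]
      exact congrArg (fun F => F e) h1
    | add u w hu hw =>
      rw [map_add, map_add, ContinuousLinearMap.add_apply, map_add, hu, hw, add_zero]
  obtain ⟨k, a, ρ, -, hmu, hTρ, hρa⟩ := exists_matrix_units n hn T hTc hne hcyc
  obtain ⟨Θ, hΘc, hΘt, hΘs⟩ := exists_theta hNA hNB ι hX ρ a hρa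
  refine ⟨k, Θ, hΘs, fun c hc => ?_⟩
  let P : CStarMatrix (Fin k) (Fin k) B → (E →L[ℂ] E) := fun c => ∑ i, ∑ j, T (a i j) * S (c i j)
  have Padd : ∀ c d, P (c + d) = P c + P d := fun c d => by
    simp [P, mul_add, Finset.sum_add_distrib]
  have Pmul : ∀ c d, P (c * d) = P c * P d := fun c d => by
    have h1 : ∀ i j l m, T (a i j) * S (c i j) * (T (a l m) * S (d l m)) =
        if j = l then T (a i m) * S (c i j * d l m) else 0 := by
      intro i j l m
      rw [mul_assoc, ← mul_assoc (S _), ← hTS, mul_assoc (T _) (S _), ← mul_assoc, hmu, map_mul]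
      split_ifs <;> simp
    simp only [P]
    simp_rw [Finset.sum_mul, Finset.mul_sum, h1]
    refine Finset.sum_congr rfl fun i _ => ?_
    simp only [CStarMatrix.mul_apply, map_sum, Finset.mul_sum]
    rw [Finset.sum_comm]
    refine Finset.sum_congr rfl fun j _ => ?_
    rw [Finset.sum_comm]
    simp
  have hPΘ : ∀ x e, π x e = P (Θ x) e := by
    intro x e
    have hc2 : Continuous fun x => P (Θ x) e := by
      simp only [P, ContinuousLinearMap.sum_apply, ContinuousLinearMap.mul_apply]
      refine continuous_finset_sum _ fun i _ => continuous_finset_sum _ fun j _ => ?_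
      exact (T (a i j)).continuous.comp ((hSc.comp (hΘc i j)).clm_apply continuous_const)
    refine hX.dense.induction_on (p := fun x => π x e = P (Θ x) e) x
        (isClosed_eq (hπc e) hc2) fun u => ?_
    induction u with
    | zero => 
      rw [map_zero, map_zero, map_zero]
      simp [P]
    | tmul c d =>
      rw [hπ]
      congr 1
      simp only [P, hΘt]
      rw [hTρ c]
      simp [Finset.sum_mul]
    | add u w hu hw =>
      rw [map_add, map_add, ContinuousLinearMap.add_apply, map_add, Padd,
        ContinuousLinearMap.add_apply, hu, hw]
  have h0 : P 0 = 0 := by simp [P]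
  have h1 := congrArg (fun F => F v) (congrArg P hc)
  simp only [Padd, Pmul, h0, ContinuousLinearMap.add_apply, ContinuousLinearMap.mul_apply,
    ContinuousLinearMap.zero_apply] at h1
  rw [← hPΘ, hbv, map_neg] at h1
  apply hv
  simpa using h1

lemma cstar_quasireg {C : Type*} [NonUnitalCStarAlgebra C] (x : C) (μ : ℂ)
    (hμ : ¬ (μ.im = 0 ∧ 0 ≤ μ.re)) : ∃ c, c + (-(μ⁻¹ • (star x * x))) + c * (-(μ⁻¹ • (star x * x))) = 0 := by
  letI : PartialOrder C := CStarAlgebra.spectralOrder _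
  haveI : StarOrderedRing C := CStarAlgebra.spectralOrderedRing _
  have hμ0 : μ ≠ 0 := by rintro rfl; simp at hμ
  have hnot : μ ∉ quasispectrum ℂ (star x * x) := by
    intro h
    have hr := (IsSelfAdjoint.star_mul_self x).quasispectrumRestricts
    have hre : ((μ.re : ℝ) : ℂ) = μ := hr.rightInvOn h
    have h2 : μ.re ∈ quasispectrum ℝ (star x * x) := hr.apply_mem h
    have h3 : 0 ≤ μ.re := quasispectrum_nonneg_of_nonneg _ (star_mul_self_nonneg x) _ h2
    refine hμ ⟨?_, h3⟩
    rw [← hre]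
    simp
  have : IsQuasiregular (-(μ⁻¹ • (star x * x))) := by
    by_contra hcon
    exact hnot (quasispectrum.mem_of_not_quasiregular _ (r := Units.mk0 μ hμ0) (by
      simpa [Units.smul_def] using hcon))
  obtain ⟨c, hc1, hc2⟩ := isQuasiregular_iff.mp this
  refine ⟨c, ?_⟩
  rw [add_comm c]
  exact hc2

lemma left_or_right {R : Type*} [NonUnitalRing R] (w : R) (h : ¬ IsQuasiregular w) :
    (∀ y, ¬ (y + w + y * w = 0)) ∨ (∀ y, ¬ (y + w + w * y = 0)) := by
  by_contra hcon
  push Not at hcon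
  obtain ⟨⟨y, hy⟩, y', hy'⟩ := hcon
  apply h
  have e1 : y * y' + w * y' + y * w * y' = 0 := by
    rw [← add_mul, ← add_mul, hy, zero_mul]
  have e2 : y * y' + y * w + y * w * y' = 0 := by
    rw [mul_assoc, ← mul_add, ← mul_add, hy', mul_zero]
  have e3 : w * y' = y * w := by
    have := e1.trans e2.symm
    simpa using this
  have e4 : y' = y := by
    rw [e3] at hy'
    have := hy'.trans hy.symm
    simpa using this
  rw [isQuasiregular_iff]
  refine ⟨y, ?_, ?_⟩
  · rw [← e4]; exact hy'
  · rw [add_comm w]; exact hy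

end PartTwelve

/-- If `A` is a subhomogeneous C⋆-algebra, then for any C⋆-algebra `B`
the Banach `*`-algebra `A ⊗̂ B` is symmetric: every element of the form `x* x` has
nonnegative (quasi)spectrum. -/
theorem osProjTensor_symmetric_of_subhomogeneous {A B X : Type u} [NonUnitalCStarAlgebra A] [NonUnitalCStarAlgebra B]
    [NonUnitalNormedRing X] [StarRing X] [NormedSpace ℂ X] [CompleteSpace X]
    [IsScalarTower ℂ X X] [SMulCommClass ℂ X X]
    (NA : ∀ p : ℕ, Matrix (Fin p) (Fin p) A → ℝ)
    (NB : ∀ q : ℕ, Matrix (Fin q) (Fin q) B → ℝ)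
    (hNA : ∀ p, IsCStarNorm (NA p)) (hNB : ∀ q, IsCStarNorm (NB q))
    (ι : A ⊗[ℂ] B →ₗ[ℂ] X) (hX : IsTensorCompletion (osProjNorm NA NB) X ι)
    (hA : IsSubhomogeneous A) :
    ∀ x : X, quasispectrum ℂ (star x * x) ⊆ {z : ℂ | z.im = 0 ∧ 0 ≤ z.re} := by
  letI : PartialOrder A := CStarAlgebra.spectralOrder _
  haveI : StarOrderedRing A := CStarAlgebra.spectralOrderedRing _
  letI : PartialOrder B := CStarAlgebra.spectralOrder _
  haveI : StarOrderedRing B := CStarAlgebra.spectralOrderedRing _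
  intro x z hz
  by_contra hcon
  have hneg : ¬ (z.im = 0 ∧ 0 ≤ z.re) := hcon
  have hz0 : z ≠ 0 := by
    rintro rfl
    simp at hneg
  have hw : ¬ IsQuasiregular (-(z⁻¹ • (star x * x))) := by
    have := hz (IsUnit.mk0 z hz0)
    simpa [Units.smul_def] using this
  set w := -(z⁻¹ • (star x * x)) with hwdef
  have hΘw : ∀ (k : ℕ) (Θ : X →ₙₐ[ℂ] CStarMatrix (Fin k) (Fin k) B),
      (∀ x, Θ (star x) = star (Θ x)) → Θ w = -(z⁻¹ • (star (Θ x) * Θ x)) := by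
    intro k Θ hs
    rw [hwdef, map_neg, map_smul, map_mul, hs]
  rcases left_or_right w hw with h | h
  · obtain ⟨k, Θ, hs, hc⟩ := exists_obstruction hNA hNB ι hX hA w h
    obtain ⟨c, hc'⟩ := cstar_quasireg (Θ x) z hneg
    rw [← hΘw k Θ hs] at hc'
    exact hc c hc'
  · have h' : ∀ y, ¬ (y + star w + y * star w = 0) := by
      intro y hy
      refine h (star y) ?_
      have := congrArg star hy
      simpa using this
    obtain ⟨k, Θ, hs, hc⟩ := exists_obstruction hNA hNB ι hX hA (star w) h'
    obtain ⟨c, hc'⟩ := cstar_quasireg (Θ x) (star z) (by simpa using hneg)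
    have e : Θ (star w) = -((star z)⁻¹ • (star (Θ x) * Θ x)) := by
      rw [hs, hΘw k Θ hs]
      simp
    rw [← e] at hc'
    exact hc c hc'

end
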